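/- arXiv:1407.6448 — 7 statements merged into one kernel-verified Lean document; each statement's English description precedes it below -/
import Mathlib

section
/- Assume condition (A) and assume the Kalman rank condition (R): for each ω ∈ S^{n−1}, the m²×m real matrix obtained by stacking L, LÃ(ω), LÃ(ω)², …, LÃ(ω)^{m−1} (where Ã(ω) := (A⁰)⁻¹A(ω)) has rank m. Then condition (K) holds; more precisely, there exists a map K : ℝⁿ → M_m(ℝ) with polynomial (hence smooth) entries satisfying K(−ω) = −K(ω) for all ω ∈ ℝⁿ, such that for every ω ∈ S^{n−1} one has (K(ω)A⁰)ᵀ = −K(ω)A⁰ and (K(ω)A(ω))₁ > 0 on Ker(L). -/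
open Matrix BigOperators Finset

noncomputable section

/-- Complexification of a real matrix. -/
def cmap {a b : ℕ} (X : Matrix (Fin a) (Fin b) ℝ) : Matrix (Fin a) (Fin b) ℂ :=
  X.map (fun x => (x : ℂ))

/-- Real part of the standard Hermitian inner product `⟨x, y⟩ = ∑ xᵢ conj yᵢ` on `ℂᵐ`. -/
def reIP {m : ℕ} (x y : Fin m → ℂ) : ℝ := (∑ i, x i * (starRingEnd ℂ) (y i)).re

/-- Symmetric part `X₁ = (X + Xᵀ)/2` of a real square matrix. -/
def symP {m : ℕ} (X : Matrix (Fin m) (Fin m) ℝ) : Matrix (Fin m) (Fin m) ℝ :=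
  (2⁻¹ : ℝ) • (X + Xᵀ)

/-- Skew-symmetric part `X₂ = (X − Xᵀ)/2` of a real square matrix. -/
def skewP {m : ℕ} (X : Matrix (Fin m) (Fin m) ℝ) : Matrix (Fin m) (Fin m) ℝ :=
  (2⁻¹ : ℝ) • (X - Xᵀ)

/-- Kernel of (the complexification of) a real matrix, as a subset of `ℂᵐ`. -/
def kerC {m : ℕ} (L : Matrix (Fin m) (Fin m) ℝ) : Set (Fin m → ℂ) :=
  {z | (cmap L).mulVec z = 0}

/-- Euclidean norm on `ℂᵐ`. -/
def cnrm {m : ℕ} (z : Fin m → ℂ) : ℝ := Real.sqrt (∑ i, Complex.normSq (z i))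

lemma finsler_aux {E : Type*} [TopologicalSpace E] (s : Set E) (hs : IsCompact s)
    (f g : E → ℝ) (hf : Continuous f) (hg : Continuous g)
    (h0 : ∀ x ∈ s, 0 ≤ f x) (h1 : ∀ x ∈ s, f x = 0 → 0 < g x) :
    ∃ c : ℝ, ∀ x ∈ s, 0 < c * f x + g x := by
  have ht : IsCompact (s ∩ {x | g x ≤ 0}) := hs.inter_right (isClosed_le hg continuous_const)
  rcases (s ∩ {x | g x ≤ 0}).eq_empty_or_nonempty with he | hne
  · refine ⟨0, fun x hx => ?_⟩
    by_contra hcon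
    have : x ∈ s ∩ {x | g x ≤ 0} := ⟨hx, by simp only [Set.mem_setOf_eq]; linarith⟩
    rw [he] at this
    exact this
  · obtain ⟨a, ha, ham⟩ := ht.exists_isMinOn hne hf.continuousOn
    obtain ⟨b, hb, hbm⟩ := ht.exists_isMinOn hne hg.continuousOn
    have hapos : 0 < f a := by
      rcases (h0 a ha.1).lt_or_eq with h | h
      · exact h
      · have := h1 a ha.1 h.symm
        have h2 : g a ≤ 0 := ha.2
        linarith
    have hb2 : g b ≤ 0 := hb.2
    have hc : 0 ≤ (1 - g b) / f a := div_nonneg (by linarith) hapos.le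
    refine ⟨(1 - g b) / f a, fun x hx => ?_⟩
    by_cases hgx : g x ≤ 0
    · have e1 : f a ≤ f x := ham ⟨hx, hgx⟩
      have e2 : g b ≤ g x := hbm ⟨hx, hgx⟩
      have e3 : (1 - g b) / f a * f a ≤ (1 - g b) / f a * f x :=
        mul_le_mul_of_nonneg_left e1 hc
      rw [div_mul_cancel₀ _ hapos.ne'] at e3
      linarith
    · have := mul_nonneg hc (h0 x hx)
      push Not at hgx
      linarith

lemma finsler {E : Type*} [TopologicalSpace E] (M : ℕ) : ∀ (s : Set E) (_ : IsCompact s)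
    (f : ℕ → E → ℝ) (_ : ∀ k, Continuous (f k))
    (_ : ∀ x ∈ s, ∃ k < M, 0 < f k x ∧ ∀ j < k, f j x = 0),
    ∃ ε : ℕ → ℝ, ∀ x ∈ s, 0 < ∑ k ∈ Finset.range M, ε k * f k x := by
  induction M with
  | zero =>
    intro s _ f _ h
    refine ⟨0, fun x hx => ?_⟩
    obtain ⟨k, hk, _⟩ := h x hx
    omega
  | succ M ih =>
    intro s hs f hf h
    obtain ⟨ε, hε⟩ := ih (s ∩ {x | f 0 x = 0})
      (hs.inter_right (isClosed_eq (hf 0) continuous_const)) (fun k => f (k + 1))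
      (fun k => hf (k + 1)) (by
        rintro x ⟨hx, hx0⟩
        obtain ⟨k, hk, hk1, hk2⟩ := h x hx
        rcases k with _ | k
        · exact absurd hx0 hk1.ne'
        · exact ⟨k, by omega, hk1, fun j hj => hk2 (j + 1) (by omega)⟩)
    obtain ⟨c, hc⟩ := finsler_aux s hs (f 0)
      (fun x => ∑ k ∈ Finset.range M, ε k * f (k + 1) x) (hf 0)
      (continuous_finset_sum _ fun k _ => continuous_const.mul (hf (k + 1)))
      (by
        intro x hx
        obtain ⟨k, hk, hk1, hk2⟩ := h x hx
        rcases k with _ | k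
        · exact hk1.le
        · exact (hk2 0 (by omega)).ge)
      (fun x hx hx0 => hε x ⟨hx, hx0⟩)
    refine ⟨fun k => Nat.casesOn k c ε, fun x hx => ?_⟩
    rw [Finset.sum_range_succ']
    have := hc x hx
    rw [add_comm] at this
    exact this

/-- Matrix families with polynomial entries. -/
def PolyM {m n : ℕ} (F : (Fin n → ℝ) → Matrix (Fin m) (Fin m) ℝ) : Prop :=
  ∃ P : Matrix (Fin m) (Fin m) (MvPolynomial (Fin n) ℝ),
    ∀ ω, F ω = (MvPolynomial.eval ω).mapMatrix P

lemma PolyM.mul {m n : ℕ} {F G : (Fin n → ℝ) → Matrix (Fin m) (Fin m) ℝ}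
    (hF : PolyM F) (hG : PolyM G) : PolyM (fun ω => F ω * G ω) := by
  obtain ⟨P, hP⟩ := hF
  obtain ⟨Q, hQ⟩ := hG
  exact ⟨P * Q, fun ω => by simp only [map_mul, hP, hQ]⟩

lemma PolyM.sub {m n : ℕ} {F G : (Fin n → ℝ) → Matrix (Fin m) (Fin m) ℝ}
    (hF : PolyM F) (hG : PolyM G) : PolyM (fun ω => F ω - G ω) := by
  obtain ⟨P, hP⟩ := hF
  obtain ⟨Q, hQ⟩ := hG
  exact ⟨P - Q, fun ω => by simp only [map_sub, hP, hQ]⟩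

lemma PolyM.pow {m n : ℕ} {F : (Fin n → ℝ) → Matrix (Fin m) (Fin m) ℝ}
    (hF : PolyM F) (k : ℕ) : PolyM (fun ω => F ω ^ k) := by
  obtain ⟨P, hP⟩ := hF
  exact ⟨P ^ k, fun ω => by simp only [map_pow, hP]⟩

lemma PolyM.transpose {m n : ℕ} {F : (Fin n → ℝ) → Matrix (Fin m) (Fin m) ℝ}
    (hF : PolyM F) : PolyM (fun ω => (F ω)ᵀ) := by
  obtain ⟨P, hP⟩ := hF
  exact ⟨Pᵀ, fun ω => by ext i j; simp [hP]⟩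

lemma PolyM.sum {m n : ℕ} {ι : Type*} (s : Finset ι)
    {F : ι → (Fin n → ℝ) → Matrix (Fin m) (Fin m) ℝ}
    (hF : ∀ i, PolyM (F i)) : PolyM (fun ω => ∑ i ∈ s, F i ω) := by
  choose P hP using hF
  exact ⟨∑ i ∈ s, P i, fun ω => by simp only [map_sum, hP]⟩

lemma PolyM.const {m n : ℕ} (X : Matrix (Fin m) (Fin m) ℝ) :
    PolyM (fun _ : Fin n → ℝ => X) :=
  ⟨X.map MvPolynomial.C, fun ω => by ext i j; simp⟩

lemma PolyM.smul {m n : ℕ} {F : (Fin n → ℝ) → Matrix (Fin m) (Fin m) ℝ}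
    (hF : PolyM F) (c : ℝ) : PolyM (fun ω => c • F ω) := by
  obtain ⟨P, hP⟩ := hF
  exact ⟨(MvPolynomial.C c : MvPolynomial (Fin n) ℝ) • P, fun ω => by ext i j; simp [hP]⟩

lemma PolyM.var {m n : ℕ} (i : Fin n) (X : Matrix (Fin m) (Fin m) ℝ) :
    PolyM (fun ω : Fin n → ℝ => ω i • X) :=
  ⟨(MvPolynomial.X i : MvPolynomial (Fin n) ℝ) • X.map MvPolynomial.C,
    fun ω => by ext i j; simp⟩

/-- The basic skew-symmetric block. -/
def blk {m : ℕ} (L T : Matrix (Fin m) (Fin m) ℝ) (k : ℕ) : Matrix (Fin m) (Fin m) ℝ :=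
  (L * T ^ (k + 1))ᵀ * (L * T ^ k) - (L * T ^ k)ᵀ * (L * T ^ (k + 1))

lemma blk_transpose {m : ℕ} (L T : Matrix (Fin m) (Fin m) ℝ) (k : ℕ) :
    (blk L T k)ᵀ = - blk L T k := by
  simp only [blk, transpose_sub, transpose_mul, transpose_transpose]
  simp only [Matrix.mul_assoc]
  abel

lemma blk_neg {m : ℕ} (L T : Matrix (Fin m) (Fin m) ℝ) (k : ℕ) :
    blk L (-T) k = - blk L T k := by
  simp only [blk]
  rcases Nat.even_or_odd k with h | h
  · rw [h.neg_pow, (h.add_one).neg_pow]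
    simp only [Matrix.mul_neg, transpose_neg, Matrix.neg_mul]
    abel
  · rw [h.neg_pow, (h.add_one).neg_pow]
    simp only [Matrix.mul_neg, transpose_neg, Matrix.neg_mul]
    abel

/-- The associated quadratic form. -/
def qf {m : ℕ} (L T : Matrix (Fin m) (Fin m) ℝ) (k : ℕ) (x : Fin m → ℝ) : ℝ :=
  ((L * T ^ (k + 1)) *ᵥ x) ⬝ᵥ ((L * T ^ (k + 1)) *ᵥ x)
    - ((L * T ^ k) *ᵥ x) ⬝ᵥ ((L * T ^ (k + 2)) *ᵥ x)

lemma dot_tmul {m : ℕ} (X Y : Matrix (Fin m) (Fin m) ℝ) (x : Fin m → ℝ) :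
    x ⬝ᵥ ((Xᵀ * Y) *ᵥ x) = (X *ᵥ x) ⬝ᵥ (Y *ᵥ x) := by
  rw [← Matrix.mulVec_mulVec, Matrix.dotProduct_mulVec, Matrix.vecMul_transpose]

lemma blk_qf {m : ℕ} (L T : Matrix (Fin m) (Fin m) ℝ) (k : ℕ) (x : Fin m → ℝ) :
    x ⬝ᵥ ((blk L T k * T) *ᵥ x) = qf L T k x := by
  simp only [blk, qf, Matrix.sub_mul, Matrix.sub_mulVec, dotProduct_sub]
  rw [Matrix.mul_assoc, Matrix.mul_assoc ((L * T ^ k)ᵀ), dot_tmul, dot_tmul,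
    Matrix.mul_assoc L, Matrix.mul_assoc L, ← pow_succ, ← pow_succ]

lemma symP_quad {m : ℕ} (X : Matrix (Fin m) (Fin m) ℝ) (z : Fin m → ℂ) :
    reIP ((cmap (symP X)).mulVec z) z =
      (fun i => (z i).re) ⬝ᵥ (X *ᵥ (fun i => (z i).re)) +
      (fun i => (z i).im) ⬝ᵥ (X *ᵥ (fun i => (z i).im)) := by
  have key : ∀ x : Fin m → ℝ, x ⬝ᵥ (X *ᵥ x) = ∑ i, ∑ j, symP X i j * x j * x i := by
    intro x
    have h1 : x ⬝ᵥ (X *ᵥ x) = ∑ i, ∑ j, X i j * x j * x i := by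
      simp only [dotProduct, mulVec, Finset.mul_sum]
      exact Finset.sum_congr rfl fun i _ => Finset.sum_congr rfl fun j _ => by ring
    have h2 : x ⬝ᵥ (X *ᵥ x) = ∑ i, ∑ j, X j i * x j * x i := by
      rw [h1, Finset.sum_comm]
      exact Finset.sum_congr rfl fun i _ => Finset.sum_congr rfl fun j _ => by ring
    have h3 : ∑ i, ∑ j, symP X i j * x j * x i =
        2⁻¹ * (∑ i, ∑ j, X i j * x j * x i + ∑ i, ∑ j, X j i * x j * x i) := by
      rw [← Finset.sum_add_distrib, Finset.mul_sum]
      refine Finset.sum_congr rfl fun i _ => ?_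
      rw [← Finset.sum_add_distrib, Finset.mul_sum]
      refine Finset.sum_congr rfl fun j _ => ?_
      simp [symP]
      ring
    rw [h3, ← h1, ← h2]
    ring
  rw [key, key, ← Finset.sum_add_distrib]
  simp only [reIP, mulVec, dotProduct, cmap, Matrix.map_apply, Complex.re_sum]
  refine Finset.sum_congr rfl fun i _ => ?_
  rw [← Finset.sum_add_distrib, Finset.sum_mul, Complex.re_sum]
  refine Finset.sum_congr rfl fun j _ => ?_
  simp

lemma cmap_re {m : ℕ} (X : Matrix (Fin m) (Fin m) ℝ) (z : Fin m → ℂ)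
    (h : (cmap X).mulVec z = 0) :
    X *ᵥ (fun i => (z i).re) = 0 ∧ X *ᵥ (fun i => (z i).im) = 0 := by
  constructor
  · ext i
    have := congrArg Complex.re (congrFun h i)
    simpa [mulVec, dotProduct, cmap, Complex.re_sum] using this
  · ext i
    have := congrArg Complex.im (congrFun h i)
    simpa [mulVec, dotProduct, cmap, Complex.im_sum] using this

lemma kalman {m : ℕ} (L T : Matrix (Fin m) (Fin m) ℝ)
    (hR : Matrix.rank (Matrix.of fun p : Fin m × Fin m => fun j : Fin m =>
        (L * T ^ (p.1 : ℕ)) p.2 j) = m) (x : Fin m → ℝ)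
    (hx : ∀ k < m, (L * T ^ k) *ᵥ x = 0) : x = 0 := by
  set M := (Matrix.of fun p : Fin m × Fin m => fun j : Fin m =>
        (L * T ^ (p.1 : ℕ)) p.2 j) with hM
  have h1 : M.mulVecLin x = 0 := by
    ext p
    exact congrFun (hx p.1 p.1.2) p.2
  have h2 := M.mulVecLin.finrank_range_add_finrank_ker
  rw [Matrix.rank] at hR
  rw [hR] at h2
  simp only [Module.finrank_fintype_fun_eq_card, Fintype.card_fin] at h2
  have h3 : LinearMap.ker M.mulVecLin = ⊥ := Submodule.finrank_eq_zero.mp (by omega)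
  have h4 : x ∈ LinearMap.ker M.mulVecLin := h1
  rw [h3] at h4
  simpa using h4

lemma qf_first {m : ℕ} (L T : Matrix (Fin m) (Fin m) ℝ)
    (hR : Matrix.rank (Matrix.of fun p : Fin m × Fin m => fun j : Fin m =>
        (L * T ^ (p.1 : ℕ)) p.2 j) = m) (x : Fin m → ℝ) (hx0 : x ≠ 0) (hL : L *ᵥ x = 0) :
    ∃ k < m, 0 < qf L T k x ∧ ∀ j < k, qf L T j x = 0 := by
  classical
  have hex : ∃ k, k < m ∧ (L * T ^ k) *ᵥ x ≠ 0 := by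
    by_contra hcon
    push Not at hcon
    exact hx0 (kalman L T hR x hcon)
  obtain ⟨hlt, hne⟩ := Nat.find_spec hex
  have hmin : ∀ j < Nat.find hex, (L * T ^ j) *ᵥ x = 0 := by
    intro j hj
    by_contra hcon
    exact Nat.find_min hex hj ⟨by omega, hcon⟩
  generalize Nat.find hex = k at hlt hne hmin
  rcases k with _ | k
  · simp [hL] at hne
  · refine ⟨k, by omega, ?_, fun j hj => ?_⟩
    · rw [qf, hmin k (by omega), zero_dotProduct, sub_zero]
      refine lt_of_le_of_ne ?_ (fun h => hne (dotProduct_self_eq_zero.mp h.symm))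
      exact Finset.sum_nonneg fun i _ => mul_self_nonneg _
    · rw [qf, hmin j (by omega), hmin (j + 1) (by omega)]
      simp

lemma qf_smul {m : ℕ} (L T : Matrix (Fin m) (Fin m) ℝ) (k : ℕ) (c : ℝ) (x : Fin m → ℝ) :
    qf L T k (c • x) = c ^ 2 * qf L T k x := by
  simp only [qf, mulVec_smul, smul_dotProduct, dotProduct_smul, smul_eq_mul]
  ring

lemma exists_eps {m n : ℕ} (L : Matrix (Fin m) (Fin m) ℝ)
    (T : (Fin n → ℝ) → Matrix (Fin m) (Fin m) ℝ) (hT : Continuous T)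
    (hR : ∀ ω : Fin n → ℝ, (∑ j, ω j ^ 2 = 1) →
      Matrix.rank (Matrix.of fun p : Fin m × Fin m => fun j : Fin m =>
        (L * (T ω) ^ (p.1 : ℕ)) p.2 j) = m) :
    ∃ ε : ℕ → ℝ, ∀ ω : Fin n → ℝ, (∑ j, ω j ^ 2 = 1) → ∀ x : Fin m → ℝ, x ≠ 0 →
      L *ᵥ x = 0 → 0 < ∑ k ∈ Finset.range m, ε k * qf L (T ω) k x := by
  have hbd : ∀ {d : ℕ} (y : Fin d → ℝ), ∑ j, y j ^ 2 = 1 → ‖y‖ ≤ 1 := by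
    intro d y hy
    rw [pi_norm_le_iff_of_nonneg zero_le_one]
    intro i
    rw [Real.norm_eq_abs, ← sq_le_one_iff_abs_le_one, ← hy]
    exact Finset.single_le_sum (f := fun j => y j ^ 2) (fun j _ => sq_nonneg _)
      (Finset.mem_univ i)
  set s : Set ((Fin n → ℝ) × (Fin m → ℝ)) :=
    {p | ∑ j, p.1 j ^ 2 = 1} ∩ ({p | ∑ j, p.2 j ^ 2 = 1} ∩ {p | L *ᵥ p.2 = 0}) with hs
  have hcl : IsClosed s := by
    refine IsClosed.inter ?_ (IsClosed.inter ?_ ?_)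
    · exact isClosed_eq (by fun_prop) continuous_const
    · exact isClosed_eq (by fun_prop) continuous_const
    · exact isClosed_eq (by fun_prop) continuous_const
  have hcomp : IsCompact s := by
    refine (isCompact_closedBall (0 : (Fin n → ℝ) × (Fin m → ℝ)) 1).of_isClosed_subset hcl ?_
    rintro ⟨a, b⟩ ⟨h1, h2, _⟩
    rw [mem_closedBall_zero_iff, Prod.norm_def]
    exact max_le (hbd _ h1) (hbd _ h2)
  obtain ⟨ε, hε⟩ := finsler m s hcomp (fun k p => qf L (T p.1) k p.2)
    (fun k => by
      unfold qf
      have hT1 : Continuous fun p : (Fin n → ℝ) × (Fin m → ℝ) => T p.1 := hT.comp continuous_fst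
      have hv : ∀ k : ℕ, Continuous fun p : (Fin n → ℝ) × (Fin m → ℝ) =>
          (L * (T p.1) ^ k) *ᵥ p.2 := fun k =>
        (continuous_const.matrix_mul (hT1.pow k)).matrix_mulVec continuous_snd
      exact ((hv _).dotProduct (hv _)).sub ((hv _).dotProduct (hv _)))
    (by
      rintro ⟨a, b⟩ ⟨h1, h2, h3⟩
      refine qf_first L (T a) (hR a h1) b ?_ h3
      rintro rfl
      simp at h2)
  refine ⟨ε, fun ω hω x hx hL => ?_⟩
  have hN : 0 < ∑ j, x j ^ 2 := by
    obtain ⟨i, hi⟩ := Function.ne_iff.mp hx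
    exact Finset.sum_pos' (fun j _ => sq_nonneg _) ⟨i, Finset.mem_univ i, by
      have : x i ≠ 0 := hi
      positivity⟩
  set r := Real.sqrt (∑ j, x j ^ 2) with hr
  have hrpos : 0 < r := Real.sqrt_pos.mpr hN
  have hr2 : r ^ 2 = ∑ j, x j ^ 2 := Real.sq_sqrt hN.le
  have := hε (ω, r⁻¹ • x) ⟨hω, by
      simp only [Set.mem_setOf_eq, Pi.smul_apply, smul_eq_mul, mul_pow]
      rw [← Finset.mul_sum, ← hr2]
      field_simp, by
      simp only [Set.mem_setOf_eq, mulVec_smul, hL, smul_zero]⟩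
  simp only [qf_smul] at this
  have e : ∑ k ∈ Finset.range m, ε k * (r⁻¹ ^ 2 * qf L (T ω) k x) =
      r⁻¹ ^ 2 * ∑ k ∈ Finset.range m, ε k * qf L (T ω) k x := by
    rw [Finset.mul_sum]
    exact Finset.sum_congr rfl fun k _ => by ring
  rw [e] at this
  exact (mul_pos_iff_of_pos_left (by positivity)).mp this

lemma A0_det {m : ℕ} (A0 : Matrix (Fin m) (Fin m) ℝ)
    (hA0pos : ∀ z : Fin m → ℂ, z ≠ 0 → 0 < reIP ((cmap A0).mulVec z) z) :
    IsUnit A0.det := by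
  rw [isUnit_iff_ne_zero]
  intro h
  obtain ⟨v, hv, hv0⟩ := Matrix.exists_mulVec_eq_zero_iff.mpr h
  have hz : (fun i => (v i : ℂ)) ≠ 0 := by
    intro hc
    apply hv
    ext i
    simpa using congrFun hc i
  have := hA0pos _ hz
  have h0 : (cmap A0).mulVec (fun i => (v i : ℂ)) = 0 := by
    ext i
    have h1 := congrFun hv0 i
    simp only [mulVec, dotProduct, cmap, Matrix.map_apply, Pi.zero_apply] at h1 ⊢
    exact_mod_cast h1
  rw [h0] at this
  simp [reIP] at this

/-- **Theorem 4.3 (the rank condition (R) implies condition (K)).**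
Under condition (A), if for each `ω ∈ S^{n−1}` the stacked matrix
`[L; LÃ(ω); …; LÃ(ω)^{m−1}]` (with `Ã(ω) = (A⁰)⁻¹A(ω)`) has rank `m`, then there is a
compensating matrix family `K(ω)` with polynomial (hence smooth) entries, odd in `ω`,
with `(K(ω)A⁰)ᵀ = −K(ω)A⁰` and `(K(ω)A(ω))₁ > 0` on `Ker(L)` for every `ω ∈ S^{n−1}`. -/
theorem rank_condition_implies_condition_K
    (m n : ℕ) (hm : 1 ≤ m) (hn : 1 ≤ n)
    (A0 : Matrix (Fin m) (Fin m) ℝ) (A : Fin n → Matrix (Fin m) (Fin m) ℝ)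
    (L : Matrix (Fin m) (Fin m) ℝ)
    -- condition (A)
    (hA0sym : A0ᵀ = A0) (hAsym : ∀ j, (A j)ᵀ = A j)
    (hA0pos : ∀ z : Fin m → ℂ, z ≠ 0 → 0 < reIP ((cmap A0).mulVec z) z)
    (hLnn : ∀ z : Fin m → ℂ, 0 ≤ reIP ((cmap L).mulVec z) z)
    (hLker : ∃ z : Fin m → ℂ, z ≠ 0 ∧ z ∈ kerC L)
    -- condition (R): the Kalman rank condition
    (hR : ∀ ω : Fin n → ℝ, (∑ j, ω j ^ 2 = 1) →
      Matrix.rank (Matrix.of fun p : Fin m × Fin m => fun j : Fin m =>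
        (L * (A0⁻¹ * (∑ i, ω i • A i)) ^ (p.1 : ℕ)) p.2 j) = m) :
    ∃ K : (Fin n → ℝ) → Matrix (Fin m) (Fin m) ℝ,
      (∀ i j, ∃ p : MvPolynomial (Fin n) ℝ, ∀ ω, K ω i j = MvPolynomial.eval ω p) ∧
      (∀ ω : Fin n → ℝ, K (-ω) = - K ω) ∧
      (∀ ω : Fin n → ℝ, (∑ j, ω j ^ 2 = 1) →
        (K ω * A0)ᵀ = -(K ω * A0) ∧
        (∀ z ∈ kerC L, z ≠ 0 →
          0 < reIP ((cmap (symP (K ω * (∑ j, ω j • A j)))).mulVec z) z)) := by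
  have hu := A0_det A0 hA0pos
  set T : (Fin n → ℝ) → Matrix (Fin m) (Fin m) ℝ := fun ω => A0⁻¹ * (∑ i, ω i • A i) with hTdef
  have hTc : Continuous T := by
    refine continuous_const.matrix_mul (continuous_finset_sum _ fun i _ => ?_)
    exact (continuous_apply i).smul continuous_const
  have hTp : PolyM T := (PolyM.const A0⁻¹).mul (PolyM.sum _ fun i => PolyM.var i (A i))
  have hTn : ∀ ω, T (-ω) = - T ω := fun ω => by
    simp [hTdef, Finset.sum_neg_distrib]
  obtain ⟨ε, hε⟩ := exists_eps L T hTc hR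
  have hB : ∀ k, PolyM (fun ω => blk L (T ω) k) := fun k => by
    have h := fun k => (PolyM.const (n := n) L).mul (hTp.pow k)
    exact ((h (k + 1)).transpose.mul (h k)).sub ((h k).transpose.mul (h (k + 1)))
  have hQ : PolyM (fun ω => (∑ k ∈ Finset.range m, ε k • blk L (T ω) k) * A0⁻¹) :=
    (PolyM.sum _ fun k => (hB k).smul (ε k)).mul (PolyM.const A0⁻¹)
  refine ⟨fun ω => (∑ k ∈ Finset.range m, ε k • blk L (T ω) k) * A0⁻¹, ?_, ?_, ?_⟩
  · obtain ⟨P, hP⟩ := hQ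
    intro i j
    refine ⟨P i j, fun ω => ?_⟩
    have := congrFun (congrFun (hP ω) i) j
    simpa using this
  · intro ω
    simp only [hTn, blk_neg, smul_neg, Finset.sum_neg_distrib, Matrix.neg_mul]
  · intro ω hω
    have hKA : ∀ x : Fin m → ℝ, x ⬝ᵥ (((∑ k ∈ Finset.range m, ε k • blk L (T ω) k) * A0⁻¹ *
        (∑ j, ω j • A j)) *ᵥ x) = ∑ k ∈ Finset.range m, ε k * qf L (T ω) k x := by
      intro x
      have hassoc : (∑ k ∈ Finset.range m, ε k • blk L (T ω) k) * A0⁻¹ * (∑ j, ω j • A j) =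
          ∑ k ∈ Finset.range m, ε k • (blk L (T ω) k * T ω) := by
        rw [Matrix.mul_assoc, Finset.sum_mul]
        exact Finset.sum_congr rfl fun k _ => Matrix.smul_mul _ _ _
      rw [hassoc, Matrix.sum_mulVec, dotProduct_sum]
      refine Finset.sum_congr rfl fun k _ => ?_
      rw [smul_mulVec, dotProduct_smul, blk_qf, smul_eq_mul]
    refine ⟨?_, ?_⟩
    · simp only
      rw [Matrix.nonsing_inv_mul_cancel_right _ _ hu]
      simp only [transpose_sum, transpose_smul, blk_transpose, smul_neg, Finset.sum_neg_distrib]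
    · intro z hz hz0
      obtain ⟨h1, h2⟩ := cmap_re L z hz
      simp only
      rw [symP_quad, hKA, hKA]
      have hnn : ∀ x : Fin m → ℝ, L *ᵥ x = 0 →
          0 ≤ ∑ k ∈ Finset.range m, ε k * qf L (T ω) k x := by
        intro x hx
        by_cases hx0 : x = 0
        · subst hx0
          simp [qf]
        · exact (hε ω hω x hx0 hx).le
      by_cases hre : (fun i => (z i).re) = 0
      · have him : (fun i => (z i).im) ≠ 0 := by
          intro him
          apply hz0
          ext i
          exact Complex.ext (congrFun hre i) (congrFun him i)
        exact add_pos_of_nonneg_of_pos (hnn _ h1) (hε ω hω _ him h2)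
      · exact add_pos_of_pos_of_nonneg (hε ω hω _ hre h1) (hnn _ h2)
end
end

section
/- Assume A⁰ is invertible and that condition (C) holds: Q(ω)(A⁰)⁻¹A(ω) = 0, R(A⁰)⁻¹L = 0, and Q(ω)(A⁰)⁻¹L + R(A⁰)⁻¹A(ω) = 0 for each ω ∈ S^{n−1}. Let r ≥ 0, ω ∈ S^{n−1}, and let û : [0,∞) → ℂᵐ be differentiable with A⁰û′(t) + i r A(ω) û(t) + L û(t) = 0 for all t ≥ 0. If the constraint i r Q(ω)û(0) + R û(0) = 0 holds at t = 0, then i r Q(ω)û(t) + R û(t) = 0 for all t ≥ 0. -/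
open Matrix BigOperators Finset

noncomputable section

/-- **Constraint propagation under condition (C).**
If `Q(ω)(A⁰)⁻¹A(ω) = 0`, `R(A⁰)⁻¹L = 0` and `Q(ω)(A⁰)⁻¹L + R(A⁰)⁻¹A(ω) = 0`, then the
constraint `i r Q(ω)û + R û = 0` is propagated in time by `A⁰û′ + i r A(ω) û + L û = 0`. -/
theorem constraint_propagation
    (m n m1 : ℕ) (hm1 : 1 ≤ m1) (hm1m : m1 < m) (hn : 1 ≤ n)
    (A0 : Matrix (Fin m) (Fin m) ℝ) (A : Fin n → Matrix (Fin m) (Fin m) ℝ)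
    (L : Matrix (Fin m) (Fin m) ℝ)
    (Q : Fin n → Matrix (Fin m1) (Fin m) ℝ) (R : Matrix (Fin m1) (Fin m) ℝ)
    (hA0inv : IsUnit A0.det)
    -- condition (C)
    (hC1 : ∀ ω : Fin n → ℝ, (∑ j, ω j ^ 2 = 1) →
      (∑ j, ω j • Q j) * A0⁻¹ * (∑ j, ω j • A j) = 0)
    (hC2 : R * A0⁻¹ * L = 0)
    (hC3 : ∀ ω : Fin n → ℝ, (∑ j, ω j ^ 2 = 1) →
      (∑ j, ω j • Q j) * A0⁻¹ * L + R * A0⁻¹ * (∑ j, ω j • A j) = 0) :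
    ∀ r : ℝ, 0 ≤ r → ∀ ω : Fin n → ℝ, (∑ j, ω j ^ 2 = 1) →
      ∀ u u' : ℝ → (Fin m → ℂ),
      (∀ t : ℝ, 0 ≤ t → HasDerivWithinAt u (u' t) (Set.Ici 0) t) →
      (∀ t : ℝ, 0 ≤ t →
        (cmap A0).mulVec (u' t)
          + ((r : ℂ) * Complex.I) • (cmap (∑ j, ω j • A j)).mulVec (u t)
          + (cmap L).mulVec (u t) = 0) →
      (((r : ℂ) * Complex.I) • (cmap (∑ j, ω j • Q j)).mulVec (u 0)
          + (cmap R).mulVec (u 0) = 0) →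
      ∀ t : ℝ, 0 ≤ t →
        ((r : ℂ) * Complex.I) • (cmap (∑ j, ω j • Q j)).mulVec (u t)
          + (cmap R).mulVec (u t) = 0 := by
  intro r _ ω hω u u' hu hode h0 t ht
  have hC1' := hC1 ω hω
  have hC3' := hC3 ω hω
  generalize (∑ j, ω j • Q j) = Qw at *
  generalize (∑ j, ω j • A j) = Aw at *
  generalize ((r : ℂ) * Complex.I) = c at *
  have cmul : ∀ {a b d : ℕ} (X : Matrix (Fin a) (Fin b) ℝ) (Y : Matrix (Fin b) (Fin d) ℝ),
      cmap (X * Y) = cmap X * cmap Y := fun X Y =>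
    Matrix.map_mul (f := Complex.ofRealHom)
  have cadd : ∀ {a b : ℕ} (X Y : Matrix (Fin a) (Fin b) ℝ),
      cmap (X + Y) = cmap X + cmap Y := by
    intro a b X Y; ext i j; simp [cmap]
  have czero : ∀ {a b : ℕ}, cmap (0 : Matrix (Fin a) (Fin b) ℝ) = 0 := by
    intro a b; ext i j; simp [cmap]
  have cone : ∀ {a : ℕ}, cmap (1 : Matrix (Fin a) (Fin a) ℝ) = 1 := by
    intro a; ext i j; by_cases h : i = j <;> simp [cmap, Matrix.one_apply, h]
  have e0 : cmap A0⁻¹ * cmap A0 = 1 := by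
    rw [← cmul, Matrix.nonsing_inv_mul _ hA0inv, cone]
  have e1 : cmap Qw * cmap A0⁻¹ * cmap Aw = 0 := by rw [← cmul, ← cmul, hC1', czero]
  have e2 : cmap R * cmap A0⁻¹ * cmap L = 0 := by rw [← cmul, ← cmul, hC2, czero]
  have e3 : cmap Qw * cmap A0⁻¹ * cmap L + cmap R * cmap A0⁻¹ * cmap Aw = 0 := by
    rw [← cmul, ← cmul, ← cmul, ← cmul, ← cadd, hC3', czero]
  have hM : ∀ v : Fin m → ℂ, c • (cmap Qw).mulVec v + (cmap R).mulVec v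
      = (c • cmap Qw + cmap R).mulVec v := by
    intro v; rw [Matrix.add_mulVec, Matrix.smul_mulVec]
  rw [hM] at h0 ⊢
  have eM : (c • cmap Qw + cmap R) * cmap A0⁻¹ * (c • cmap Aw + cmap L) = 0 := by
    have : (c • cmap Qw + cmap R) * cmap A0⁻¹ * (c • cmap Aw + cmap L)
        = c • c • (cmap Qw * cmap A0⁻¹ * cmap Aw)
          + c • (cmap Qw * cmap A0⁻¹ * cmap L + cmap R * cmap A0⁻¹ * cmap Aw)
          + cmap R * cmap A0⁻¹ * cmap L := by
      simp only [Matrix.add_mul, Matrix.mul_add, Matrix.smul_mul, Matrix.mul_smul, smul_add]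
      abel
    rw [this, e1, e2, e3]; simp
  generalize (c • cmap Qw + cmap R) = M at *
  have hd : ∀ s : ℝ, 0 ≤ s → M.mulVec (u' s) = 0 := by
    intro s hs
    have h1 : (cmap A0).mulVec (u' s) = -((c • cmap Aw + cmap L).mulVec (u s)) := by
      rw [Matrix.add_mulVec, Matrix.smul_mulVec, eq_neg_iff_add_eq_zero, ← add_assoc]
      exact hode s hs
    calc M.mulVec (u' s) = (M * cmap A0⁻¹).mulVec ((cmap A0).mulVec (u' s)) := by
          rw [Matrix.mulVec_mulVec, Matrix.mul_assoc, e0, Matrix.mul_one]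
      _ = 0 := by
          rw [h1, Matrix.mulVec_neg, Matrix.mulVec_mulVec, eM, Matrix.zero_mulVec, neg_zero]
  have hder : ∀ s : ℝ, 0 ≤ s →
      HasDerivWithinAt (fun s => M.mulVec (u s)) 0 (Set.Ici 0) s := by
    intro s hs
    rw [← hd s hs]
    let T : (Fin m → ℂ) →L[ℝ] (Fin m1 → ℂ) :=
      LinearMap.toContinuousLinearMap (M.mulVecLin.restrictScalars ℝ)
    exact T.hasFDerivAt.comp_hasDerivWithinAt s (hu s hs)
  have key := constant_of_has_deriv_right_zero (f := fun s => M.mulVec (u s)) (a := 0) (b := t)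
    (fun s hs => ((hder s hs.1).continuousWithinAt).mono (fun x hx => hx.1))
    (fun s hs => (hder s hs.1).mono (fun x hx => le_trans hs.1 hx)) t ⟨ht, le_rfl⟩
  exact key.trans h0
end
end

section
/- Assume conditions (A), (C), (S), (S*)₂ and (K*). Then there exist constants C > 0 and c > 0 such that for every r ≥ 0, every ω ∈ S^{n−1}, and every differentiable function û : [0,∞) → ℂᵐ satisfying A⁰û′(t) + i r A(ω) û(t) + L û(t) = 0 for all t ≥ 0 and the initial constraint i r Q(ω)û(0) + R û(0) = 0, one has |û(t)| ≤ C e^{−c ρ(r) t} |û(0)| for all t ≥ 0, where ρ(r) = r²/(1 + r²). -/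
open Matrix BigOperators Finset

noncomputable section

theorem reIP_eq {m : ℕ} (x y : Fin m → ℂ) :
    reIP x y = ∑ i, ((x i).re * (y i).re + (x i).im * (y i).im) := by
  unfold reIP
  rw [Complex.re_sum]
  refine Finset.sum_congr rfl fun i _ => ?_
  simp [Complex.mul_re]

theorem reIP_comm' {m : ℕ} (x y : Fin m → ℂ) : reIP x y = reIP y x := by
  simp only [reIP_eq]
  exact Finset.sum_congr rfl fun i _ => by ring

theorem reIP_add_left {m : ℕ} (x y z : Fin m → ℂ) : reIP (x + y) z = reIP x z + reIP y z := by
  simp only [reIP_eq, ← Finset.sum_add_distrib]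
  exact Finset.sum_congr rfl fun i _ => by simp; ring

theorem reIP_add_right {m : ℕ} (x y z : Fin m → ℂ) : reIP z (x + y) = reIP z x + reIP z y := by
  rw [reIP_comm', reIP_add_left, reIP_comm' x, reIP_comm' y]

theorem reIP_smul_left {m : ℕ} (a : ℝ) (x z : Fin m → ℂ) :
    reIP ((a : ℂ) • x) z = a * reIP x z := by
  simp only [reIP_eq, Finset.mul_sum]
  exact Finset.sum_congr rfl fun i _ => by simp; ring

theorem reIP_smul_right {m : ℕ} (a : ℝ) (x z : Fin m → ℂ) :
    reIP z ((a : ℂ) • x) = a * reIP z x := by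
  rw [reIP_comm', reIP_smul_left, reIP_comm']

theorem reIP_neg_left {m : ℕ} (x z : Fin m → ℂ) : reIP (-x) z = - reIP x z := by
  have := reIP_smul_left (-1) x z
  simpa using this

theorem reIP_neg_right {m : ℕ} (x z : Fin m → ℂ) : reIP z (-x) = - reIP z x := by
  rw [reIP_comm', reIP_neg_left, reIP_comm']

theorem reIP_I_I {m : ℕ} (x z : Fin m → ℂ) :
    reIP (Complex.I • x) (Complex.I • z) = reIP x z := by
  simp only [reIP_eq]
  exact Finset.sum_congr rfl fun i _ => by simp; ring

theorem reIP_I_left {m : ℕ} (x z : Fin m → ℂ) :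
    reIP (Complex.I • x) z = - reIP x (Complex.I • z) := by
  simp only [reIP_eq, ← Finset.sum_neg_distrib]
  exact Finset.sum_congr rfl fun i _ => by simp

theorem reIP_self_nonneg {m : ℕ} (x : Fin m → ℂ) : 0 ≤ reIP x x := by
  rw [reIP_eq]
  exact Finset.sum_nonneg fun i _ => add_nonneg (mul_self_nonneg _) (mul_self_nonneg _)

theorem reIP_self_eq_zero {m : ℕ} {x : Fin m → ℂ} (h : reIP x x = 0) : x = 0 := by
  rw [reIP_eq, Finset.sum_eq_zero_iff_of_nonneg (fun i _ => add_nonneg (mul_self_nonneg _) (mul_self_nonneg _))] at h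
  funext i
  have := h i (Finset.mem_univ i)
  apply Complex.ext <;> simp <;> nlinarith [sq_nonneg (x i).re, sq_nonneg (x i).im]

theorem reIP_young {m : ℕ} (x y : Fin m → ℂ) (e : ℝ) (he : 0 < e) :
    2 * reIP x y ≤ e * reIP y y + reIP x x / e := by
  have h := reIP_self_nonneg (x + ((-e : ℝ) : ℂ) • y)
  rw [reIP_add_left, reIP_add_right, reIP_add_right, reIP_smul_left, reIP_smul_right,
    reIP_smul_left, reIP_smul_right, reIP_comm' y x] at h
  have : e * reIP y y + reIP x x / e - 2 * reIP x y =
    (reIP x x + -e * reIP x y + (-e * reIP x y + -e * (-e * reIP y y))) / e := by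
    field_simp
    try ring
  have h2 := div_nonneg h he.le
  linarith

theorem cnrm_eq {m : ℕ} (z : Fin m → ℂ) : cnrm z = Real.sqrt (reIP z z) := by
  unfold cnrm
  rw [reIP_eq]
  simp [Complex.normSq_apply]

theorem cmap_mul {a b c : ℕ} (X : Matrix (Fin a) (Fin b) ℝ) (Y : Matrix (Fin b) (Fin c) ℝ) :
    cmap (X * Y) = cmap X * cmap Y := by
  unfold cmap
  exact Matrix.map_mul (f := Complex.ofRealHom)

theorem cmap_add {a b : ℕ} (X Y : Matrix (Fin a) (Fin b) ℝ) :
    cmap (X + Y) = cmap X + cmap Y := by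
  ext i j; simp [cmap]

theorem cmap_sub {a b : ℕ} (X Y : Matrix (Fin a) (Fin b) ℝ) :
    cmap (X - Y) = cmap X - cmap Y := by
  ext i j; simp [cmap]

theorem cmap_neg {a b : ℕ} (X : Matrix (Fin a) (Fin b) ℝ) :
    cmap (-X) = - cmap X := by
  ext i j; simp [cmap]

theorem cmap_zero {a b : ℕ} : cmap (0 : Matrix (Fin a) (Fin b) ℝ) = 0 := by
  ext i j; simp [cmap]

theorem cmap_one {a : ℕ} : cmap (1 : Matrix (Fin a) (Fin a) ℝ) = 1 := by
  ext i j; by_cases h : i = j <;> simp [cmap, Matrix.one_apply, h]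

theorem cmap_smul {a b : ℕ} (c : ℝ) (X : Matrix (Fin a) (Fin b) ℝ) :
    cmap (c • X) = (c : ℂ) • cmap X := by
  ext i j; simp [cmap]

theorem reIP_adj {a b : ℕ} (X : Matrix (Fin a) (Fin b) ℝ) (z : Fin b → ℂ) (w : Fin a → ℂ) :
    reIP ((cmap X).mulVec z) w = reIP z ((cmap Xᵀ).mulVec w) := by
  unfold reIP
  congr 1
  simp only [Matrix.mulVec, dotProduct, Finset.sum_mul, map_sum, Finset.mul_sum]
  rw [Finset.sum_comm]
  refine Finset.sum_congr rfl fun i _ => Finset.sum_congr rfl fun j _ => ?_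
  simp [cmap]; ring

theorem reIP_symP {m : ℕ} (X : Matrix (Fin m) (Fin m) ℝ) (z : Fin m → ℂ) :
    reIP ((cmap (symP X)).mulVec z) z = reIP ((cmap X).mulVec z) z := by
  unfold symP
  rw [cmap_smul, Matrix.smul_mulVec, reIP_smul_left, cmap_add, Matrix.add_mulVec, reIP_add_left,
    reIP_comm' ((cmap Xᵀ).mulVec z), ← reIP_adj]
  ring

theorem reIP_skewP {m : ℕ} (X : Matrix (Fin m) (Fin m) ℝ) (z : Fin m → ℂ) :
    reIP ((Complex.I • cmap (skewP X)).mulVec z) z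
      = reIP (Complex.I • (cmap X).mulVec z) z := by
  unfold skewP
  have h : reIP (Complex.I • (cmap Xᵀ).mulVec z) z = - reIP (Complex.I • (cmap X).mulVec z) z := by
    rw [reIP_I_left, reIP_comm', ← reIP_adj, Matrix.mulVec_smul]
  rw [cmap_smul, Matrix.smul_mulVec, Matrix.smul_mulVec, smul_comm, reIP_smul_left, cmap_sub,
    Matrix.sub_mulVec, smul_sub, sub_eq_add_neg, reIP_add_left, reIP_neg_left, h]
  ring

theorem continuous_reIP {α : Type*} [TopologicalSpace α] {m : ℕ} {f g : α → Fin m → ℂ}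
    (hf : Continuous f) (hg : Continuous g) : Continuous fun a => reIP (f a) (g a) := by
  unfold reIP
  fun_prop

theorem continuous_cmap {α : Type*} [TopologicalSpace α] {a b : ℕ}
    {f : α → Matrix (Fin a) (Fin b) ℝ}
    (hf : Continuous f) : Continuous fun x => cmap (f x) := by
  unfold cmap
  exact hf.matrix_map Complex.continuous_ofReal

/-- The single compactness lemma. -/
theorem compact_bound {n m p : ℕ} (D : (Fin n → ℝ) → Matrix (Fin p) (Fin m) ℂ)
    (hD : Continuous D)
    (g : (Fin n → ℝ) → (Fin m → ℂ) → ℝ)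
    (hg : Continuous fun q : (Fin n → ℝ) × (Fin m → ℂ) => g q.1 q.2)
    (b : (Fin m → ℂ) → ℝ) (hb : Continuous b)
    (hgh : ∀ ω (a : ℝ) z, g ω ((a : ℂ) • z) = a ^ 2 * g ω z)
    (hbh : ∀ (a : ℝ) z, b ((a : ℂ) • z) = a ^ 2 * b z)
    (hbn : ∀ z, 0 ≤ b z)
    (hpos : ∀ ω : Fin n → ℝ, (∑ j, ω j ^ 2 = 1) → ∀ z, (D ω).mulVec z = 0 → b z = 0 → z ≠ 0 →
      0 < g ω z) :
    ∃ N > (0:ℝ), ∃ δ > (0:ℝ), ∀ ω : Fin n → ℝ, (∑ j, ω j ^ 2 = 1) → ∀ z, (D ω).mulVec z = 0 →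
      δ * reIP z z ≤ g ω z + N * b z := by
  set Ks : Set ((Fin n → ℝ) × (Fin m → ℂ)) :=
    {q | ∑ j, q.1 j ^ 2 = 1 ∧ reIP q.2 q.2 = 1 ∧ (D q.1).mulVec q.2 = 0} with hKs
  have hclosed : IsClosed Ks := by
    refine IsClosed.inter (isClosed_eq (by fun_prop) continuous_const)
      (IsClosed.inter (isClosed_eq (continuous_reIP continuous_snd continuous_snd)
        continuous_const) (isClosed_eq ?_ continuous_const))
    exact (hD.comp continuous_fst).matrix_mulVec continuous_snd
  have hbdd : Ks ⊆ Metric.closedBall 0 1 := by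
    rintro ⟨ω, z⟩ ⟨h1, h2, -⟩
    rw [mem_closedBall_zero_iff, Prod.norm_def, max_le_iff, pi_norm_le_iff_of_nonneg zero_le_one,
      pi_norm_le_iff_of_nonneg zero_le_one]
    constructor
    · intro j
      have : ω j ^ 2 ≤ ∑ j, ω j ^ 2 :=
        Finset.single_le_sum (f := fun j => ω j ^ 2) (fun i _ => sq_nonneg _) (Finset.mem_univ j)
      simp only at h1
      rw [Real.norm_eq_abs, ← sq_le_one_iff_abs_le_one]
      linarith
    · intro j
      simp only [reIP_eq] at h2
      have : (z j).re * (z j).re + (z j).im * (z j).im ≤ _ :=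
        Finset.single_le_sum (f := fun j => (z j).re * (z j).re + (z j).im * (z j).im)
        (fun i _ => add_nonneg (mul_self_nonneg _) (mul_self_nonneg _)) (Finset.mem_univ j)
      rw [h2, ← Complex.normSq_apply, Complex.normSq_eq_norm_sq] at this
      nlinarith [norm_nonneg (z j)]
  have hcomp : IsCompact Ks := (isCompact_closedBall _ _).of_isClosed_subset hclosed hbdd
  have key : ∃ k : ℕ, Ks ⊆ {q | 1 / ((k : ℝ) + 1) < g q.1 q.2 + k * b q.2} := by
    refine hcomp.elim_directed_cover
      (fun k : ℕ => {q | 1 / ((k : ℝ) + 1) < g q.1 q.2 + k * b q.2}) ?_ ?_ ?_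
    · intro k
      exact isOpen_lt continuous_const (hg.add (continuous_const.mul (hb.comp continuous_snd)))
    · rintro ⟨ω, z⟩ ⟨h1, h2, h3⟩
      simp only [Set.mem_iUnion, Set.mem_ofPred_eq]
      by_cases hz : b z = 0
      · have hz0 : z ≠ 0 := by
          rintro rfl
          simp [reIP] at h2
        have := hpos ω h1 z h3 hz hz0
        obtain ⟨k, hk⟩ := exists_nat_one_div_lt this
        exact ⟨k, by simpa [hz] using hk⟩
      · have hzp : 0 < b z := lt_of_le_of_ne (hbn z) (Ne.symm hz)
        obtain ⟨k, hk⟩ := exists_nat_gt ((1 - g ω z) / b z)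
        refine ⟨k, ?_⟩
        rw [div_lt_iff₀ hzp] at hk
        have : 1 / ((k : ℝ) + 1) ≤ 1 := by
          rw [div_le_one (by positivity)]; linarith [Nat.cast_nonneg (α := ℝ) k]
        linarith
    · refine directed_of_isDirected_le ?_
      intro k l hkl q hq
      simp only [Set.mem_ofPred_eq] at hq ⊢
      have hkl' : (k : ℝ) ≤ l := by exact_mod_cast hkl
      have h1 : 1 / ((l : ℝ) + 1) ≤ 1 / ((k : ℝ) + 1) :=
        one_div_le_one_div_of_le (by positivity) (by linarith)
      have h2 := mul_le_mul_of_nonneg_right hkl' (hbn q.2)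
      linarith
  obtain ⟨k, hk⟩ := key
  refine ⟨k + 1, by positivity, 1 / ((k : ℝ) + 1), by positivity, ?_⟩
  intro ω hω z hz
  by_cases hz0 : z = 0
  · have e1 := hgh ω 0 z
    have e2 := hbh 0 z
    subst hz0
    simp only [smul_zero] at e1 e2
    rw [e1, e2]; simp [reIP]
  have hzp : 0 < reIP z z :=
    lt_of_le_of_ne (reIP_self_nonneg z) (fun h => hz0 (reIP_self_eq_zero h.symm))
  set a := Real.sqrt (reIP z z) with ha
  have hap : 0 < a := Real.sqrt_pos.mpr hzp
  have ha2 : a ^ 2 = reIP z z := Real.sq_sqrt hzp.le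
  have hmem : (ω, ((a⁻¹ : ℝ) : ℂ) • z) ∈ Ks := by
    refine ⟨hω, ?_, ?_⟩
    · simp only [reIP_smul_left, reIP_smul_right]
      rw [← ha2]; field_simp
    · simp only [Matrix.mulVec_smul, hz, smul_zero]
  have := hk hmem
  simp only [Set.mem_ofPred_eq, hgh, hbh] at this
  have h3 := mul_le_mul_of_nonneg_left this.le (sq_nonneg a)
  have h4 : a ^ 2 * (a⁻¹ ^ 2 * g ω z + k * (a⁻¹ ^ 2 * b z)) = g ω z + k * b z := by
    field_simp
  rw [h4, ha2] at h3
  have := hbn z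
  linarith

/-- Factorization bound. -/
theorem ker_bound {m : ℕ} (Y L : Matrix (Fin m) (Fin m) ℂ)
    (h : ∀ z, Y.mulVec z = 0 → L.mulVec z = 0) :
    ∃ X : Matrix (Fin m) (Fin m) ℂ, ∀ z, L.mulVec z = X.mulVec (Y.mulVec z) := by
  obtain ⟨s, hs⟩ := (Y.mulVecLin.rangeRestrict).exists_rightInverse_of_surjective
    (LinearMap.range_rangeRestrict _)
  obtain ⟨G, hG⟩ := s.exists_extend
  refine ⟨L * LinearMap.toMatrix' G, fun z => ?_⟩
  have h1 : G (Y.mulVec z) = s (Y.mulVecLin.rangeRestrict z) := by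
    rw [← hG]; rfl
  have h2 : Y.mulVec (s (Y.mulVecLin.rangeRestrict z)) = Y.mulVec z := by
    have := congrArg Subtype.val (LinearMap.congr_fun hs (Y.mulVecLin.rangeRestrict z))
    simpa using this
  have h3 : Y.mulVec (s (Y.mulVecLin.rangeRestrict z) - z) = 0 := by
    rw [Matrix.mulVec_sub, h2, sub_self]
  have h4 := h _ h3
  rw [Matrix.mulVec_sub, sub_eq_zero] at h4
  rw [← Matrix.mulVec_mulVec, LinearMap.toMatrix'_mulVec, h1, h4]

/-- Derivative of a matrix applied to a curve. -/
theorem deriv_mulVec {a b : ℕ} (M : Matrix (Fin a) (Fin b) ℂ) {u : ℝ → Fin b → ℂ}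
    {u' : Fin b → ℂ} {s : Set ℝ} {t : ℝ} (h : HasDerivWithinAt u u' s t) :
    HasDerivWithinAt (fun t => M.mulVec (u t)) (M.mulVec u') s t := by
  rw [hasDerivWithinAt_pi] at h ⊢
  intro i
  simp only [Matrix.mulVec, dotProduct]
  exact HasDerivWithinAt.fun_sum fun j _ => (h j).const_mul (M i j)

theorem deriv_reIP {a : ℕ} {u v : ℝ → Fin a → ℂ}
    {u' v' : Fin a → ℂ} {s : Set ℝ} {t : ℝ} (hu : HasDerivWithinAt u u' s t)
    (hv : HasDerivWithinAt v v' s t) :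
    HasDerivWithinAt (fun t => reIP (u t) (v t)) (reIP u' (v t) + reIP (u t) v') s t := by
  rw [hasDerivWithinAt_pi] at hu hv
  simp only [reIP_eq, ← Finset.sum_add_distrib]
  refine HasDerivWithinAt.fun_sum fun j _ => ?_
  have r1 := Complex.reCLM.hasFDerivAt.comp_hasDerivWithinAt t (hu j)
  have r2 := Complex.reCLM.hasFDerivAt.comp_hasDerivWithinAt t (hv j)
  have i1 := Complex.imCLM.hasFDerivAt.comp_hasDerivWithinAt t (hu j)
  have i2 := Complex.imCLM.hasFDerivAt.comp_hasDerivWithinAt t (hv j)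
  have := (r1.mul r2).add (i1.mul i2)
  refine this.congr_deriv ?_
  simp
  ring

theorem deriv_quad {a : ℕ} (M : Matrix (Fin a) (Fin a) ℂ) {u : ℝ → Fin a → ℂ}
    {u' : Fin a → ℂ} {s : Set ℝ} {t : ℝ}
    (hM : ∀ x y, reIP (M.mulVec x) y = reIP x (M.mulVec y))
    (hu : HasDerivWithinAt u u' s t) :
    HasDerivWithinAt (fun t => reIP (M.mulVec (u t)) (u t)) (2 * reIP (M.mulVec u') (u t)) s t := by
  refine (deriv_reIP (deriv_mulVec M hu) hu).congr_deriv ?_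
  rw [hM (u t), reIP_comm' (u t)]; ring

theorem decay_ode (E E' : ℝ → ℝ) (κ : ℝ)
    (hE : ∀ t, 0 ≤ t → HasDerivWithinAt E (E' t) (Set.Ici 0) t)
    (hd : ∀ t, 0 ≤ t → E' t ≤ - κ * E t) (t : ℝ) (ht : 0 ≤ t) :
    E t ≤ Real.exp (-(κ * t)) * E 0 := by
  have hder : ∀ x, 0 ≤ x → HasDerivWithinAt (fun s => Real.exp (κ * s) * E s)
      (Real.exp (κ * x) * (κ * E x + E' x)) (Set.Ici 0) x := by
    intro x hx
    have h1 : HasDerivAt (fun s => Real.exp (κ * s)) (Real.exp (κ * x) * (κ * 1)) x :=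
      ((hasDerivAt_id x).const_mul κ).exp
    refine (h1.hasDerivWithinAt.mul (hE x hx)).congr_deriv ?_
    ring
  have hanti : AntitoneOn (fun s => Real.exp (κ * s) * E s) (Set.Ici 0) := by
    refine antitoneOn_of_hasDerivWithinAt_nonpos (convex_Ici 0)
      (fun x hx => (hder x hx).continuousWithinAt)
      (f' := fun x => Real.exp (κ * x) * (κ * E x + E' x)) ?_ ?_
    · intro x hx
      exact (hder x (interior_subset hx)).mono interior_subset
    · intro x hx
      have := hd x (interior_subset hx)
      exact mul_nonpos_of_nonneg_of_nonpos (Real.exp_pos _).le (by linarith)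
  have := hanti (Set.self_mem_Ici) ht ht
  simp only [mul_zero, Real.exp_zero, one_mul] at this
  rw [Real.exp_neg, inv_mul_eq_div, le_div_iff₀ (Real.exp_pos _)]
  linarith

/-- Uniform bound of a quadratic function on the sphere. -/
theorem unif_bound {n m : ℕ} 
    (g : (Fin n → ℝ) → (Fin m → ℂ) → ℝ)
    (hg : Continuous fun q : (Fin n → ℝ) × (Fin m → ℂ) => g q.1 q.2)
    (hgh : ∀ ω (a : ℝ) z, g ω ((a : ℂ) • z) = a ^ 2 * g ω z) :
    ∃ N > (0:ℝ), ∀ ω : Fin n → ℝ, (∑ j, ω j ^ 2 = 1) → ∀ z, |g ω z| ≤ N * reIP z z := by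
  obtain ⟨N, hN, δ, hδ, h⟩ := compact_bound (p := 0) (fun _ => 0) continuous_const
    (fun ω z => - |g ω z|) (hg.abs.neg) (fun z => reIP z z)
    (continuous_reIP continuous_id continuous_id)
    (by intro ω a z; simp only [hgh, abs_mul, abs_sq]; ring)
    (by intro a z; simp only [reIP_smul_left, reIP_smul_right]; ring)
    reIP_self_nonneg
    (fun ω _ z _ h0 hz => absurd (reIP_self_eq_zero h0) hz)
  refine ⟨N, hN, fun ω hω z => ?_⟩
  have h1 := h ω hω z (by simp)
  have := mul_nonneg hδ.le (reIP_self_nonneg z)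
  linarith

theorem quad_hom {m : ℕ} (M : Matrix (Fin m) (Fin m) ℂ) (a : ℝ) (z : Fin m → ℂ) :
    reIP (M.mulVec ((a : ℂ) • z)) ((a : ℂ) • z) = a ^ 2 * reIP (M.mulVec z) z := by
  rw [Matrix.mulVec_smul, reIP_smul_left, reIP_smul_right]; ring

theorem quad_hom' {m p : ℕ} (M : Matrix (Fin p) (Fin m) ℂ) (a : ℝ) (z : Fin m → ℂ) :
    reIP (M.mulVec ((a : ℂ) • z)) (M.mulVec ((a : ℂ) • z))
      = a ^ 2 * reIP (M.mulVec z) (M.mulVec z) := by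
  rw [Matrix.mulVec_smul, reIP_smul_left, reIP_smul_right]; ring

open scoped ComplexOrder MatrixOrder Matrix.Norms.L2Operator in
theorem psd_bound {m : ℕ} (B L : Matrix (Fin m) (Fin m) ℝ) (hB : Bᵀ = B)
    (hBn : ∀ z : Fin m → ℂ, 0 ≤ reIP ((cmap B).mulVec z) z)
    (hker : kerC B = kerC L) :
    (∀ z : Fin m → ℂ, reIP ((cmap B).mulVec z) z = 0 → z ∈ kerC L) ∧
    ∃ l > (0:ℝ), ∀ z : Fin m → ℂ, reIP ((cmap L).mulVec z) ((cmap L).mulVec z) ≤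
      l * reIP ((cmap B).mulVec z) z := by
  have hH : (cmap B).IsHermitian := by
    ext i j
    have := congrFun (congrFun hB i) j
    simp [cmap, ← this]
  have hpsd : (cmap B).PosSemidef := by
    refine Matrix.PosSemidef.of_dotProduct_mulVec_nonneg hH fun x => ?_
    have h1 := hBn x
    rw [Complex.nonneg_iff]
    refine ⟨?_, ?_⟩
    · convert h1 using 2
      rw [reIP_eq]
      simp [dotProduct, mul_comm]
    · have := hH.im_star_dotProduct_mulVec_self x
      simpa using this.symm
  obtain ⟨Y, hY⟩ := CStarAlgebra.nonneg_iff_eq_star_mul_self.mp hpsd.nonneg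
  rw [Matrix.star_eq_conjTranspose] at hY
  have hq : ∀ z, reIP ((cmap B).mulVec z) z = reIP (Y.mulVec z) (Y.mulVec z) := by
    intro z
    rw [hY, ← Matrix.mulVec_mulVec]
    unfold reIP
    congr 1
    change (Yᴴ.mulVec (Y.mulVec z)) ⬝ᵥ star z = (Y.mulVec z) ⬝ᵥ star (Y.mulVec z)
    rw [Matrix.star_mulVec, dotProduct_comm, Matrix.dotProduct_mulVec, dotProduct_comm]
  have hYL : ∀ z, Y.mulVec z = 0 → (cmap L).mulVec z = 0 := by
    intro z hz
    have : z ∈ kerC B := by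
      change (cmap B).mulVec z = 0
      rw [hY, ← Matrix.mulVec_mulVec, hz, Matrix.mulVec_zero]
    rw [hker] at this
    exact this
  refine ⟨fun z hz => hYL z (reIP_self_eq_zero (by rw [← hq, hz])), ?_⟩
  obtain ⟨X, hX⟩ := ker_bound Y (cmap L) hYL
  obtain ⟨l, hl, h⟩ := unif_bound (n := 1)
    (fun _ z => reIP (X.mulVec z) (X.mulVec z))
    (continuous_reIP (continuous_const.matrix_mulVec continuous_snd)
      (continuous_const.matrix_mulVec continuous_snd)) (fun _ => quad_hom' X)
  refine ⟨l, hl, fun z => ?_⟩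
  rw [hX, hq]
  exact (le_abs_self _).trans (h (fun _ => 1) (by simp) _)

theorem reIP_I_sym {m : ℕ} (X : Matrix (Fin m) (Fin m) ℝ) (hX : Xᵀ = X) (z : Fin m → ℂ) :
    reIP (Complex.I • (cmap X).mulVec z) z = 0 := by
  have h : reIP (Complex.I • (cmap X).mulVec z) z = - reIP (Complex.I • (cmap X).mulVec z) z := by
    conv_lhs => rw [reIP_I_left, reIP_adj, hX, Matrix.mulVec_smul, reIP_comm']
  linarith

theorem A0_unit {m : ℕ} (A0 : Matrix (Fin m) (Fin m) ℝ)
    (hA0pos : ∀ z : Fin m → ℂ, z ≠ 0 → 0 < reIP ((cmap A0).mulVec z) z) : A0⁻¹ * A0 = 1 := by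
  refine Matrix.nonsing_inv_mul _ ?_
  rw [isUnit_iff_ne_zero]
  intro h
  obtain ⟨v, hv, hv0⟩ := Matrix.exists_mulVec_eq_zero_iff.2 h
  have h1 : (cmap A0).mulVec (fun i => (v i : ℂ)) = 0 := by
    funext i
    have := congrFun hv0 i
    simp only [Matrix.mulVec, dotProduct, cmap, Matrix.map_apply, Pi.zero_apply] at this ⊢
    exact_mod_cast this
  have h2 := hA0pos (fun i => (v i : ℂ)) (by
    intro h0
    apply hv
    funext i
    have := congrFun h0 i
    simpa using this)
  rw [h1] at h2
  simp [reIP] at h2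

/-- Testing the equation. -/
theorem test_eq {m : ℕ} (A0 A L X : Matrix (Fin m) (Fin m) ℝ) (r : ℝ) (z w y : Fin m → ℂ)
    (h : (cmap A0).mulVec w + ((r : ℂ) * Complex.I) • (cmap A).mulVec z + (cmap L).mulVec z = 0) :
    reIP ((cmap (X * A0)).mulVec w) y =
      - (r * reIP (Complex.I • (cmap (X * A)).mulVec z) y) - reIP ((cmap (X * L)).mulVec z) y := by
  have h1 := congrArg (fun v => reIP ((cmap X).mulVec v) y) h
  simp only [Matrix.mulVec_add, Matrix.mulVec_smul, Matrix.mulVec_mulVec, ← cmap_mul,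
    reIP_add_left, mul_smul, reIP_smul_left, Matrix.mulVec_zero] at h1
  have : reIP (0 : Fin m → ℂ) y = 0 := by simp [reIP]
  linarith

/-- Propagation of the constraint. -/
theorem constraint {m m1 : ℕ} (A0 A L : Matrix (Fin m) (Fin m) ℝ) (Q R : Matrix (Fin m1) (Fin m) ℝ)
    (hinv : A0⁻¹ * A0 = 1)
    (hC1 : Q * A0⁻¹ * A = 0) (hC2 : R * A0⁻¹ * L = 0) (hC3 : Q * A0⁻¹ * L + R * A0⁻¹ * A = 0)
    (r : ℝ) (u u' : ℝ → (Fin m → ℂ))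
    (hu : ∀ t : ℝ, 0 ≤ t → HasDerivWithinAt u (u' t) (Set.Ici 0) t)
    (heq : ∀ t : ℝ, 0 ≤ t → (cmap A0).mulVec (u' t)
          + ((r : ℂ) * Complex.I) • (cmap A).mulVec (u t) + (cmap L).mulVec (u t) = 0)
    (h0 : ((r : ℂ) * Complex.I) • (cmap Q).mulVec (u 0) + (cmap R).mulVec (u 0) = 0)
    (t : ℝ) (ht : 0 ≤ t) :
    ((r : ℂ) * Complex.I) • (cmap Q).mulVec (u t) + (cmap R).mulVec (u t) = 0 := by
  set W : Matrix (Fin m1) (Fin m) ℂ := ((r : ℂ) * Complex.I) • cmap Q + cmap R with hW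
  have hWz : ∀ z, W.mulVec z = ((r : ℂ) * Complex.I) • (cmap Q).mulVec z + (cmap R).mulVec z := by
    intro z
    rw [hW, Matrix.add_mulVec, Matrix.smul_mulVec]
  have hd : ∀ x, 0 ≤ x → W.mulVec (u' x) = 0 := by
    intro x hx
    have e : u' x = (cmap A0⁻¹).mulVec ((cmap A0).mulVec (u' x)) := by
      rw [Matrix.mulVec_mulVec, ← cmap_mul, hinv, cmap_one, Matrix.one_mulVec]
    have e2 : (cmap A0).mulVec (u' x)
        = -(((r : ℂ) * Complex.I) • (cmap A).mulVec (u x) + (cmap L).mulVec (u x)) := by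
      rw [eq_neg_iff_add_eq_zero, ← add_assoc]; exact heq x hx
    have c1 : (cmap Q * cmap A0⁻¹ * cmap A).mulVec (u x) = 0 := by
      rw [← cmap_mul, ← cmap_mul, hC1, cmap_zero, Matrix.zero_mulVec]
    have c2 : (cmap R * cmap A0⁻¹ * cmap L).mulVec (u x) = 0 := by
      rw [← cmap_mul, ← cmap_mul, hC2, cmap_zero, Matrix.zero_mulVec]
    have c3 : (cmap Q * cmap A0⁻¹ * cmap L).mulVec (u x)
        + (cmap R * cmap A0⁻¹ * cmap A).mulVec (u x) = 0 := by
      rw [← Matrix.add_mulVec, ← cmap_mul, ← cmap_mul, ← cmap_mul, ← cmap_mul, ← cmap_add, hC3,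
        cmap_zero, Matrix.zero_mulVec]
    rw [hWz, e, e2]
    simp only [Matrix.mulVec_neg, Matrix.mulVec_add, Matrix.mulVec_smul, Matrix.mulVec_mulVec,
      ← Matrix.mul_assoc] at c1 c2 c3 ⊢
    rw [c1, c2, eq_neg_of_add_eq_zero_left c3]
    simp
  have hconst := constant_of_has_deriv_right_zero (f := fun s => W.mulVec (u s)) (a := 0) (b := t)
    (fun x hx => ((deriv_mulVec W (hu x hx.1)).continuousWithinAt).mono
      (fun y hy => hy.1))
    (fun x hx => by
      have := deriv_mulVec W (hu x hx.1)
      rw [hd x hx.1] at this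
      exact this.mono (fun y hy => le_trans hx.1 hy)) t ⟨ht, le_rfl⟩
  rw [← hWz]
  refine hconst.trans ?_
  rw [hWz, h0]

theorem sign_term {m m1 : ℕ} (S A : Matrix (Fin m) (Fin m) ℝ) (Q R : Matrix (Fin m1) (Fin m) ℝ)
    (Pi1 St : Matrix (Fin m1) (Fin m1) ℝ) (hPR : Pi1 * R = R)
    (hSt : ∀ φ : Fin m → ℂ,
      0 ≤ reIP ((cmap (symP St)).mulVec ((cmap R).mulVec φ)) ((cmap R).mulVec φ))
    (z : Fin m → ℂ)
    (hS2 : 0 ≤ reIP ((Complex.I • cmap (skewP (S * A - (Pi1 * Q)ᵀ * St * R))).mulVec z) z)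
    (r : ℝ) (hr : 0 ≤ r)
    (hc : ((r : ℂ) * Complex.I) • (cmap Q).mulVec z + (cmap R).mulVec z = 0) :
    0 ≤ r * reIP (Complex.I • (cmap (S * A)).mulVec z) z := by
  rw [reIP_skewP, cmap_sub, Matrix.sub_mulVec, smul_sub, sub_eq_add_neg, reIP_add_left,
    reIP_neg_left] at hS2
  have h1 := mul_nonneg hr hS2
  have hc2 : (r : ℂ) • (cmap (Pi1 * Q)).mulVec z = Complex.I • (cmap R).mulVec z := by
    have e := congrArg (fun v => Complex.I • (cmap Pi1).mulVec v) hc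
    simp only [Matrix.mulVec_add, Matrix.mulVec_smul, Matrix.mulVec_mulVec, ← cmap_mul, hPR,
      Matrix.mulVec_zero, smul_zero, smul_add, smul_smul] at e
    have e3 : Complex.I * ((r : ℂ) * Complex.I) = -(r : ℂ) := by
      rw [mul_left_comm, Complex.I_mul_I]; ring
    rw [e3, neg_smul] at e
    exact (neg_add_eq_zero.mp e)
  have h2 : r * reIP (Complex.I • (cmap ((Pi1 * Q)ᵀ * St * R)).mulVec z) z
      = reIP ((cmap (symP St)).mulVec ((cmap R).mulVec z)) ((cmap R).mulVec z) := by
    rw [reIP_symP, Matrix.mul_assoc, cmap_mul, ← Matrix.mulVec_mulVec, ← Matrix.mulVec_smul, reIP_adj,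
      Matrix.transpose_transpose, ← reIP_smul_right, hc2, reIP_I_I, cmap_mul,
      ← Matrix.mulVec_mulVec]
  have h3 := hSt z
  nlinarith

theorem arith_final (M α ρ τ r l sl sa b G x Y W n2 N δ k2 ℓ : ℝ)
    (hn2 : 0 ≤ n2) (hb : 0 ≤ b) (hα : 0 < α) (hρ0 : 0 ≤ ρ) (hρ1 : ρ ≤ 1) (hτ : τ ^ 2 ≤ ρ)
    (hδ : 0 < δ) (hk2 : 0 < k2) (hℓ : 0 < ℓ) (hN : 0 < N)
    (hM : 1 ≤ M) (hl : 0 ≤ l) (hlb : l + sl = b) (hsa : 0 ≤ r * sa)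
    (hK : ρ * (δ * n2) ≤ ρ * (G + N * b))
    (hx : -2 * τ * x ≤ δ / k2 * (τ ^ 2 * Y) + W / (δ / k2)) (hY : Y ≤ k2 * n2)
    (hW : W ≤ ℓ * b) (hα1 : α * (N + ℓ * k2 / (2 * δ)) ≤ 1) :
    (-(M * l) + (-(r * sa) - sl)) - α * (ρ * G + τ * x) ≤ - (α * ρ * δ / 2 * n2) := by
  have h1 : l ≤ M * l := le_mul_of_one_le_left hl hM
  have h2 : τ ^ 2 * Y ≤ ρ * (k2 * n2) := by
    calc τ ^ 2 * Y ≤ τ ^ 2 * (k2 * n2) := mul_le_mul_of_nonneg_left hY (sq_nonneg _)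
      _ ≤ ρ * (k2 * n2) := mul_le_mul_of_nonneg_right hτ (by positivity)
  have h3 : δ / k2 * (τ ^ 2 * Y) ≤ δ * ρ * n2 := by
    calc δ / k2 * (τ ^ 2 * Y) ≤ δ / k2 * (ρ * (k2 * n2)) :=
          mul_le_mul_of_nonneg_left h2 (by positivity)
      _ = δ * ρ * n2 := by field_simp
  have h4 : W / (δ / k2) ≤ 2 * (ℓ * k2 / (2 * δ)) * b := by
    calc W / (δ / k2) ≤ ℓ * b / (δ / k2) := div_le_div_of_nonneg_right hW (by positivity)
      _ = _ := by field_simp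
  have h5 : ρ * (N * b) ≤ N * b := mul_le_of_le_one_left (by positivity) hρ1
  set q := ℓ * k2 / (2 * δ)
  have h6 : - (ρ * G + τ * x) ≤ - (ρ * δ / 2 * n2) + (N + q) * b := by nlinarith
  have h7 := mul_le_mul_of_nonneg_left h6 hα.le
  have h8 := mul_le_mul_of_nonneg_right hα1 hb
  nlinarith

/-- **Theorem 5.2 (decay of the standard type for systems with constraint,
pointwise estimate).** Under conditions (A), (C), (S), (S*)₂ and (K*), solutions of
`A⁰û′ + i r A(ω) û + L û = 0` whose data satisfy the constraint
`i r Q(ω)û(0) + R û(0) = 0` obey `|û(t)| ≤ C e^{−c ρ(r) t} |û(0)|`, `ρ(r) = r²/(1+r²)`. -/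
theorem decay_standard_with_constraint
    (m n m1 : ℕ) (hm1 : 1 ≤ m1) (hm1m : m1 < m) (hn : 1 ≤ n)
    (A0 : Matrix (Fin m) (Fin m) ℝ) (A : Fin n → Matrix (Fin m) (Fin m) ℝ)
    (L : Matrix (Fin m) (Fin m) ℝ)
    (Q : Fin n → Matrix (Fin m1) (Fin m) ℝ) (R : Matrix (Fin m1) (Fin m) ℝ)
    -- condition (A)
    (hA0sym : A0ᵀ = A0) (hAsym : ∀ j, (A j)ᵀ = A j)
    (hA0pos : ∀ z : Fin m → ℂ, z ≠ 0 → 0 < reIP ((cmap A0).mulVec z) z)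
    (hLnn : ∀ z : Fin m → ℂ, 0 ≤ reIP ((cmap L).mulVec z) z)
    (hLker : ∃ z : Fin m → ℂ, z ≠ 0 ∧ z ∈ kerC L)
    -- condition (C)
    (hC1 : ∀ ω : Fin n → ℝ, (∑ j, ω j ^ 2 = 1) →
      (∑ j, ω j • Q j) * A0⁻¹ * (∑ j, ω j • A j) = 0)
    (hC2 : R * A0⁻¹ * L = 0)
    (hC3 : ∀ ω : Fin n → ℝ, (∑ j, ω j ^ 2 = 1) →
      (∑ j, ω j • Q j) * A0⁻¹ * L + R * A0⁻¹ * (∑ j, ω j • A j) = 0)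
    -- condition (S)
    (S : Matrix (Fin m) (Fin m) ℝ)
    (hSA0 : (S * A0)ᵀ = S * A0)
    (hSLnn : ∀ z : Fin m → ℂ, 0 ≤ reIP ((cmap (symP (S * L) + symP L)).mulVec z) z)
    (hSLker : kerC (symP (S * L) + symP L) = kerC L)
    -- `Π₁` : the orthogonal projection of `ℂ^{m₁}` onto `Image(R)`; `Π₂ = I − Π₁`
    (Pi1 : Matrix (Fin m1) (Fin m1) ℝ)
    (hPi1sym : Pi1ᵀ = Pi1) (hPi1idem : Pi1 * Pi1 = Pi1)
    (hPi1fix : ∀ φ : Fin m → ℝ, Pi1.mulVec (R.mulVec φ) = R.mulVec φ)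
    (hPi1ran : ∀ z : Fin m1 → ℝ, ∃ φ : Fin m → ℝ, Pi1.mulVec z = R.mulVec φ)
    -- condition (S*)₂ : there is `S̃` with `S̃₁ ≥ 0` on `Image(R)` such that, with
    -- `T(ω) = (Π₁Q(ω))ᵀ S̃ R`, one has `i(SA(ω) − T(ω))₂ ≥ 0` on `ℂᵐ`
    (St : Matrix (Fin m1) (Fin m1) ℝ)
    (hSt : ∀ φ : Fin m → ℂ,
      0 ≤ reIP ((cmap (symP St)).mulVec ((cmap R).mulVec φ)) ((cmap R).mulVec φ))
    (hSstar2 : ∀ ω : Fin n → ℝ, (∑ j, ω j ^ 2 = 1) → ∀ z : Fin m → ℂ,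
      0 ≤ reIP ((Complex.I • cmap (skewP
        (S * (∑ j, ω j • A j) - (Pi1 * (∑ j, ω j • Q j))ᵀ * St * R))).mulVec z) z)
    -- condition (K*): positivity on `X_ω ∩ Ker(L)`
    (K : (Fin n → ℝ) → Matrix (Fin m) (Fin m) ℝ)
    (hKsmooth : ∀ i j, ContDiff ℝ (⊤ : ℕ∞) (fun ω => K ω i j))
    (hKodd : ∀ ω : Fin n → ℝ, (∑ j, ω j ^ 2 = 1) → K (-ω) = - K ω)
    (hKA0 : ∀ ω : Fin n → ℝ, (∑ j, ω j ^ 2 = 1) → (K ω * A0)ᵀ = -(K ω * A0))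
    (hKpos : ∀ ω : Fin n → ℝ, (∑ j, ω j ^ 2 = 1) → ∀ z : Fin m → ℂ,
      (cmap ((1 - Pi1) * (∑ j, ω j • Q j))).mulVec z = 0 → z ∈ kerC L → z ≠ 0 →
      0 < reIP ((cmap (symP (K ω * (∑ j, ω j • A j)))).mulVec z) z) :
    ∃ C > (0:ℝ), ∃ c > (0:ℝ), ∀ r : ℝ, 0 ≤ r → ∀ ω : Fin n → ℝ, (∑ j, ω j ^ 2 = 1) →
      ∀ u u' : ℝ → (Fin m → ℂ),
      (∀ t : ℝ, 0 ≤ t → HasDerivWithinAt u (u' t) (Set.Ici 0) t) →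
      (∀ t : ℝ, 0 ≤ t →
        (cmap A0).mulVec (u' t)
          + ((r : ℂ) * Complex.I) • (cmap (∑ j, ω j • A j)).mulVec (u t)
          + (cmap L).mulVec (u t) = 0) →
      (((r : ℂ) * Complex.I) • (cmap (∑ j, ω j • Q j)).mulVec (u 0)
          + (cmap R).mulVec (u 0) = 0) →
      ∀ t : ℝ, 0 ≤ t →
        cnrm (u t) ≤ C * Real.exp (-(c * (r ^ 2 / (1 + r ^ 2)) * t)) * cnrm (u 0) := by
  have hcA : Continuous fun ω : Fin n → ℝ => ∑ j, ω j • A j :=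
    continuous_finsetSum _ fun j _ => (continuous_apply j).smul continuous_const
  have hcQ : Continuous fun ω : Fin n → ℝ => ∑ j, ω j • Q j :=
    continuous_finsetSum _ fun j _ => (continuous_apply j).smul continuous_const
  have hcK : Continuous K :=
    continuous_matrix fun i j => (hKsmooth i j).continuous
  have hPR : Pi1 * R = R := by
    refine Matrix.ext_of_mulVec_single fun i => ?_
    rw [← Matrix.mulVec_mulVec, hPi1fix]
  have hinv := A0_unit A0 hA0pos
  set B := symP (S * L) + symP L with hBdef
  have hBT : Bᵀ = B := by
    rw [hBdef]; unfold symP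
    simp only [Matrix.transpose_add, Matrix.transpose_smul, Matrix.transpose_transpose]
    rw [add_comm (S * L)ᵀ, add_comm Lᵀ]
  have hBq : ∀ z : Fin m → ℂ, reIP ((cmap B).mulVec z) z
      = reIP ((cmap L).mulVec z) z + reIP ((cmap (S * L)).mulVec z) z := by
    intro z
    rw [hBdef, cmap_add, Matrix.add_mulVec, reIP_add_left, reIP_symP, reIP_symP, add_comm]
  obtain ⟨hBker, ℓ, hℓ, hLb⟩ := psd_bound B L hBT hSLnn hSLker
  -- uniform constants
  obtain ⟨_, _, a0, ha0, hA0lo⟩ := compact_bound (n := n) (p := 0) (fun _ => 0) continuous_const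
    (fun _ z => reIP ((cmap A0).mulVec z) z)
    (continuous_reIP (continuous_const.matrix_mulVec continuous_snd) continuous_snd)
    (fun _ => 0) continuous_const (fun _ => quad_hom _) (by simp) (by simp)
    (fun ω _ z _ _ hz => hA0pos z hz)
  simp only [mul_zero, add_zero] at hA0lo
  obtain ⟨a1, ha1, hA0hi⟩ := unif_bound (n := n) (fun _ z => reIP ((cmap A0).mulVec z) z)
    (continuous_reIP (continuous_const.matrix_mulVec continuous_snd) continuous_snd)
    (fun _ => quad_hom _)
  obtain ⟨s, hs, hSA⟩ := unif_bound (n := n) (fun _ z => reIP ((cmap (S * A0)).mulVec z) z)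
    (continuous_reIP (continuous_const.matrix_mulVec continuous_snd) continuous_snd)
    (fun _ => quad_hom _)
  obtain ⟨k1, hk1, hKb⟩ := unif_bound (n := n)
    (fun ω z => reIP ((Complex.I • cmap (K ω * A0)).mulVec z) z)
    (continuous_reIP (((continuous_cmap ((hcK.comp continuous_fst).matrix_mul
      continuous_const)).const_smul Complex.I).matrix_mulVec continuous_snd) continuous_snd)
    (fun _ => quad_hom _)
  obtain ⟨k2, hk2, hKT⟩ := unif_bound (n := n)
    (fun ω z => reIP ((cmap (K ω)ᵀ).mulVec z) ((cmap (K ω)ᵀ).mulVec z))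
    (continuous_reIP ((continuous_cmap (hcK.comp continuous_fst).matrix_transpose).matrix_mulVec
      continuous_snd) ((continuous_cmap (hcK.comp continuous_fst).matrix_transpose).matrix_mulVec
      continuous_snd))
    (fun _ => quad_hom' _)
  obtain ⟨N, hN, δ, hδ, hKA⟩ := compact_bound
    (fun ω : Fin n → ℝ => cmap ((1 - Pi1) * (∑ j, ω j • Q j)))
    (continuous_cmap (continuous_const.matrix_mul hcQ))
    (fun ω z => reIP ((cmap (K ω * (∑ j, ω j • A j))).mulVec z) z)
    (continuous_reIP ((continuous_cmap ((hcK.comp continuous_fst).matrix_mul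
      (hcA.comp continuous_fst))).matrix_mulVec continuous_snd) continuous_snd)
    (fun z => reIP ((cmap B).mulVec z) z)
    (continuous_reIP (continuous_const.matrix_mulVec continuous_id) continuous_id)
    (fun _ => quad_hom _) (quad_hom _) hSLnn
    (fun ω hω z h1 h2 h3 => by
      rw [← reIP_symP]
      exact hKpos ω hω z h1 (hBker z h2) h3)
  set M := 1 + (s + 1) / a0 with hM
  have hM1 : 1 ≤ M := by rw [hM]; have : 0 < (s + 1) / a0 := by positivity
                         linarith
  have hMa : M * a0 = a0 + (s + 1) := by rw [hM]; field_simp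
  have hqpos : 0 < ℓ * k2 / (2 * δ) := by positivity
  set q := ℓ * k2 / (2 * δ) with hq
  set α := 1 / (1 + 2 * k1 + N + q) with hα
  have hαp : 0 < α := by positivity
  have hαe : α * (1 + 2 * k1 + N + q) = 1 := by rw [hα]; field_simp
  have hαN : α * (N + q) ≤ 1 := by nlinarith
  have hαk : α * k1 ≤ 1 / 2 := by nlinarith
  set c2 := M * a1 + s + 1 with hc2
  have hc2p : 0 < c2 := by positivity
  refine ⟨Real.sqrt (2 * c2), Real.sqrt_pos.mpr (by positivity), α * δ / (2 * c2), by positivity, ?_⟩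
  intro r hr ω hω u u' hu heq hinit t ht
  set Aω := ∑ j, ω j • A j with hAω
  set Qω := ∑ j, ω j • Q j with hQω
  have hcon := constraint A0 Aω L Qω R hinv (hC1 ω hω) hC2 (hC3 ω hω) r u u' hu heq hinit
  have hAωT : Aωᵀ = Aω := by
    rw [hAω, Matrix.transpose_sum]
    exact Finset.sum_congr rfl fun j _ => by rw [Matrix.transpose_smul, hAsym]
  set τ := r / (1 + r ^ 2) with hτ
  set ρ := r ^ 2 / (1 + r ^ 2) with hρ
  have hr1 : 0 < 1 + r ^ 2 := by positivity
  have hτ0 : 0 ≤ τ := by positivity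
  have hτ1 : τ ≤ 1 := by rw [hτ, div_le_one hr1]; nlinarith
  have hρ0 : 0 ≤ ρ := by positivity
  have hρ1 : ρ ≤ 1 := by rw [hρ, div_le_one hr1]; linarith
  have hρτ : ρ = τ * r := by rw [hρ, hτ]; ring
  have hτ2 : τ ^ 2 ≤ ρ := by
    rw [hτ, hρ, div_pow]
    apply div_le_div_of_nonneg_left (by positivity) hr1
    nlinarith [sq_nonneg r]
  set E : ℝ → ℝ := fun t => M * reIP ((cmap A0).mulVec (u t)) (u t)
    + reIP ((cmap (S * A0)).mulVec (u t)) (u t)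
    - α * τ * reIP ((Complex.I • cmap (K ω * A0)).mulVec (u t)) (u t) with hE
  set E' : ℝ → ℝ := fun t => M * (2 * reIP ((cmap A0).mulVec (u' t)) (u t))
    + 2 * reIP ((cmap (S * A0)).mulVec (u' t)) (u t)
    - α * τ * (2 * reIP ((Complex.I • cmap (K ω * A0)).mulVec (u' t)) (u t)) with hE'
  have hEd : ∀ t, 0 ≤ t → HasDerivWithinAt E (E' t) (Set.Ici 0) t := by
    intro t ht
    have d1 := deriv_quad (cmap A0) (fun x y => by rw [reIP_adj, hA0sym]) (hu t ht)
    have d2 := deriv_quad (cmap (S * A0)) (fun x y => by rw [reIP_adj, hSA0]) (hu t ht)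
    have d3 := deriv_quad (Complex.I • cmap (K ω * A0)) (fun x y => by
      rw [Matrix.smul_mulVec, Matrix.smul_mulVec, reIP_I_left, reIP_adj, hKA0 ω hω, cmap_neg,
        Matrix.neg_mulVec, reIP_neg_right, neg_neg, Matrix.mulVec_smul]) (hu t ht)
    exact ((d1.const_mul M).add d2).sub (d3.const_mul (α * τ))
  have hpert : ∀ z, |α * τ * reIP ((Complex.I • cmap (K ω * A0)).mulVec z) z|
      ≤ 1 / 2 * reIP z z := by
    intro z
    have h1 := hKb ω hω z
    have hz := reIP_self_nonneg z
    rw [abs_mul, abs_of_nonneg (by positivity : 0 ≤ α * τ)]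
    calc α * τ * |reIP ((Complex.I • cmap (K ω * A0)).mulVec z) z|
        ≤ α * 1 * (k1 * reIP z z) := by gcongr
      _ = α * k1 * reIP z z := by ring
      _ ≤ 1 / 2 * reIP z z := by gcongr
  have hElo : ∀ t, 1 / 2 * reIP (u t) (u t) ≤ E t := by
    intro t
    have h1 := abs_le.1 (hpert (u t))
    have h2 := abs_le.1 (hSA ω hω (u t))
    have h3 := mul_le_mul_of_nonneg_left (hA0lo ω hω (u t) (by simp)) (by linarith : 0 ≤ M)
    rw [← mul_assoc, hMa] at h3
    have hz := mul_nonneg ha0.le (reIP_self_nonneg (u t))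
    simp only [hE]
    linarith [h1.2, h2.1]
  have hEhi : ∀ t, E t ≤ c2 * reIP (u t) (u t) := by
    intro t
    have h1 := abs_le.1 (hpert (u t))
    have h2 := abs_le.1 (hSA ω hω (u t))
    have h3 := mul_le_mul_of_nonneg_left ((abs_le.1 (hA0hi ω hω (u t))).2) (by linarith : 0 ≤ M)
    have hz := reIP_self_nonneg (u t)
    simp only [hE, hc2]
    linarith [h1.1, h2.2]
  have hdis : ∀ t, 0 ≤ t → E' t ≤ - (α * ρ * δ * reIP (u t) (u t)) := by
    intro t ht
    have e1 := test_eq A0 Aω L 1 r (u t) (u' t) (u t) (heq t ht)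
    rw [one_mul, one_mul, one_mul, reIP_I_sym Aω hAωT] at e1
    have e2 := test_eq A0 Aω L S r (u t) (u' t) (u t) (heq t ht)
    have e3 := test_eq A0 Aω L (K ω) r (u t) (u' t) (Complex.I • u t) (heq t ht)
    rw [reIP_I_I, cmap_mul (K ω) L, ← Matrix.mulVec_mulVec, reIP_adj (K ω)] at e3
    have e4 : reIP ((Complex.I • cmap (K ω * A0)).mulVec (u' t)) (u t)
      = - reIP ((cmap (K ω * A0)).mulVec (u' t)) (Complex.I • u t) := by
      rw [Matrix.smul_mulVec, reIP_I_left]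
    set y := (cmap (K ω)ᵀ).mulVec (Complex.I • u t) with hy
    have hY : reIP y y ≤ k2 * reIP (u t) (u t) := by
      have := (le_abs_self _).trans (hKT ω hω (Complex.I • u t))
      rwa [reIP_I_I] at this
    have hyoung := reIP_young ((cmap L).mulVec (u t)) (((-τ : ℝ) : ℂ) • y) (δ / k2) (by positivity)
    rw [reIP_smul_right, reIP_smul_left, reIP_smul_right] at hyoung
    have hK : ρ * (δ * reIP (u t) (u t))
        ≤ ρ * (reIP ((cmap (K ω * Aω)).mulVec (u t)) (u t)
          + N * reIP ((cmap B).mulVec (u t)) (u t)) := by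
      rcases hr.eq_or_lt with h0 | hpos
      · have : ρ = 0 := by rw [hρ, ← h0]; simp
        rw [this]; simp
      · refine mul_le_mul_of_nonneg_left (hKA ω hω (u t) ?_) hρ0
        have hc := congrArg (fun v => (cmap (1 - Pi1)).mulVec v) (hcon t ht)
        simp only [Matrix.mulVec_add, Matrix.mulVec_smul, Matrix.mulVec_mulVec, ← cmap_mul,
          Matrix.mulVec_zero] at hc
        have hz : (1 - Pi1) * R = 0 := by rw [Matrix.sub_mul, Matrix.one_mul, hPR, sub_self]
        rw [hz, cmap_zero, Matrix.zero_mulVec, add_zero] at hc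
        refine (smul_eq_zero.1 hc).resolve_left ?_
        exact mul_ne_zero (by exact_mod_cast hpos.ne') Complex.I_ne_zero
    have hfin := arith_final M α ρ τ r (reIP ((cmap L).mulVec (u t)) (u t))
      (reIP ((cmap (S * L)).mulVec (u t)) (u t))
      (reIP (Complex.I • (cmap (S * Aω)).mulVec (u t)) (u t))
      (reIP ((cmap B).mulVec (u t)) (u t))
      (reIP ((cmap (K ω * Aω)).mulVec (u t)) (u t))
      (reIP ((cmap L).mulVec (u t)) y) (reIP y y)
      (reIP ((cmap L).mulVec (u t)) ((cmap L).mulVec (u t)))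
      (reIP (u t) (u t)) N δ k2 ℓ (reIP_self_nonneg _) (hSLnn _) hαp hρ0 hρ1 hτ2 hδ hk2 hℓ hN hM1
      (hLnn _) (hBq _).symm
      (sign_term S Aω Qω R Pi1 St hPR hSt (u t) (hSstar2 ω hω (u t)) r hr (hcon t ht))
      hK (by linarith) hY (hLb _) hαN
    simp only [hE']
    rw [e4, e1, e2, e3]
    rw [hρτ] at hfin ⊢
    linarith
  have hfinal := decay_ode E E' (α * ρ * δ / c2) hEd (fun t ht => by
    have h1 := hdis t ht
    have h2 : α * ρ * δ / c2 * E t ≤ α * ρ * δ / c2 * (c2 * reIP (u t) (u t)) :=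
      mul_le_mul_of_nonneg_left (hEhi t) (by positivity)
    have h3 : α * ρ * δ / c2 * (c2 * reIP (u t) (u t)) = α * ρ * δ * reIP (u t) (u t) := by
      field_simp
    linarith) t ht
  rw [cnrm_eq, cnrm_eq]
  apply Real.sqrt_le_iff.2
  refine ⟨by positivity, ?_⟩
  rw [mul_pow, mul_pow, Real.sq_sqrt (by positivity), Real.sq_sqrt (reIP_self_nonneg _),
    ← Real.exp_nat_mul]
  have hexp : ((2 : ℕ) : ℝ) * (-(α * δ / (2 * c2) * ρ * t)) = -(α * ρ * δ / c2 * t) := by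
    push_cast; field_simp
  rw [hexp]
  have h1 := hElo t
  have h2 := mul_le_mul_of_nonneg_left (hEhi 0) (Real.exp_pos (-(α * ρ * δ / c2 * t))).le
  linarith
end
end

section
/- Let a > 0, γ > 0 and let A and L be the Timoshenko coefficient matrices. Define K := [[0,1,0,0],[−1,0,0,0],[0,0,0,−1],[0,0,1,0]]. Then K is skew-symmetric, for every φ = (φ₁,φ₂,φ₃,φ₄) ∈ ℂ⁴ one has Re⟨(KA)₁φ, φ⟩ = −|φ₁|² + |φ₂|² + a|φ₃|² − a|φ₄|², and consequently (KA)₁ > 0 on Ker(L): for every nonzero φ ∈ Ker(L) (i.e., φ₁ = φ₄ = 0) one has Re⟨(KA)₁φ, φ⟩ = |φ₂|² + a|φ₃|² > 0. -/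
open Matrix BigOperators Finset

noncomputable section

/-- Coefficient matrix `A` of the Timoshenko system. -/
def TimA (a : ℝ) : Matrix (Fin 4) (Fin 4) ℝ :=
  -(!![0, 1, 0, 0; 1, 0, 0, 0; 0, 0, 0, a; 0, 0, a, 0])

/-- Relaxation matrix `L` of the Timoshenko system. -/
def TimL (γ : ℝ) : Matrix (Fin 4) (Fin 4) ℝ :=
  !![0, 0, 0, 1; 0, 0, 0, 0; 0, 0, 0, 0; -1, 0, 0, γ]

/-- **Condition (K) for the Timoshenko system.** With
`K = [[0,1,0,0],[−1,0,0,0],[0,0,0,−1],[0,0,1,0]]`, `K` is skew-symmetric,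
`Re⟨(KA)₁φ, φ⟩ = −|φ₁|² + |φ₂|² + a|φ₃|² − a|φ₄|²`, and `(KA)₁ > 0` on `Ker(L)`:
for nonzero `φ ∈ Ker(L)`, `Re⟨(KA)₁φ, φ⟩ = |φ₂|² + a|φ₃|² > 0`. -/
theorem timoshenko_condition_K
    (a γ : ℝ) (ha : 0 < a) (hγ : 0 < γ)
    (K : Matrix (Fin 4) (Fin 4) ℝ)
    (hK : K = !![0, 1, 0, 0; -1, 0, 0, 0; 0, 0, 0, -1; 0, 0, 1, 0]) :
    Kᵀ = -K ∧
    (∀ φ : Fin 4 → ℂ,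
      reIP ((cmap (symP (K * TimA a))).mulVec φ) φ
        = -Complex.normSq (φ 0) + Complex.normSq (φ 1)
            + a * Complex.normSq (φ 2) - a * Complex.normSq (φ 3)) ∧
    (∀ φ : Fin 4 → ℂ, φ ∈ kerC (TimL γ) →
      (reIP ((cmap (symP (K * TimA a))).mulVec φ) φ
          = Complex.normSq (φ 1) + a * Complex.normSq (φ 2)) ∧
      (φ ≠ 0 → 0 < reIP ((cmap (symP (K * TimA a))).mulVec φ) φ)) := by
  have hsym : symP (K * TimA a) = Matrix.diagonal ![-1, 1, a, -a] := by
    subst hK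
    ext i j
    fin_cases i <;> fin_cases j <;>
      simp [symP, TimA, Matrix.mul_apply, Fin.sum_univ_four] <;> ring
  have h2 : ∀ φ : Fin 4 → ℂ,
      reIP ((cmap (symP (K * TimA a))).mulVec φ) φ
        = -Complex.normSq (φ 0) + Complex.normSq (φ 1)
            + a * Complex.normSq (φ 2) - a * Complex.normSq (φ 3) := by
    intro φ
    rw [hsym]
    simp [reIP, cmap, Matrix.mulVec, dotProduct, Fin.sum_univ_four, Matrix.diagonal,
      Complex.normSq_apply]
    ring
  refine ⟨?_, h2, ?_⟩
  · subst hK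
    ext i j
    fin_cases i <;> fin_cases j <;> simp
  · intro φ hφ
    have hφ' : (cmap (TimL γ)).mulVec φ = 0 := hφ
    have h3 : φ 3 = 0 := by
      have := congrFun hφ' 0
      simpa [cmap, TimL, Matrix.mulVec, dotProduct, Fin.sum_univ_four] using this
    have h0 : φ 0 = 0 := by
      have := congrFun hφ' 3
      simpa [cmap, TimL, Matrix.mulVec, dotProduct, Fin.sum_univ_four, h3] using this
    have h4 : reIP ((cmap (symP (K * TimA a))).mulVec φ) φ
          = Complex.normSq (φ 1) + a * Complex.normSq (φ 2) := by
      rw [h2, h0, h3]; simp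
    refine ⟨h4, fun hne => ?_⟩
    rw [h4]
    by_cases h1 : φ 1 = 0
    · have hh : φ 2 ≠ 0 := by
        intro h
        apply hne
        ext i
        fin_cases i <;> simp [h0, h1, h, h3]
      have := Complex.normSq_pos.2 hh
      have := Complex.normSq_nonneg (φ 1)
      positivity
    · have := Complex.normSq_pos.2 h1
      have := Complex.normSq_nonneg (φ 2)
      positivity
end
end

section
/- Let a > 0, γ > 0 and let A and L be the Timoshenko coefficient matrices. For 0 < β < 4γ/(γ² + 4), define S := −β[[0,0,0,1],[0,0,a,0],[0,a,0,0],[1,0,0,0]]. Then S is symmetric and there exists a constant c > 0 such that Re⟨((SL)₁ + L₁)φ, φ⟩ ≥ c(|φ₁|² + |φ₄|²) for all φ = (φ₁,φ₂,φ₃,φ₄) ∈ ℂ⁴; consequently (SL)₁ + L₁ ≥ 0 on ℂ⁴ and Ker((SL)₁ + L₁) = span{e₂, e₃} = Ker(L). Moreover, for every φ ∈ ℂ⁴, Re⟨i(SA)₂φ, φ⟩ = β(a² − 1)Im(φ₂φ̄₄); in particular i(SA)₂ = 0 on Ker(L₁) = span{e₁, e₂, e₃}, and if a = 1 then (SA)₂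 = 0. -/
open Matrix BigOperators Finset

noncomputable section

theorem tim_M1 (a γ β : ℝ) (S : Matrix (Fin 4) (Fin 4) ℝ)
    (hS : S = -β • !![0, 0, 0, 1; 0, 0, a, 0; 0, a, 0, 0; 1, 0, 0, 0]) :
    symP (S * TimL γ) + symP (TimL γ) =
      !![β, 0, 0, -(β*γ/2); 0, 0, 0, 0; 0, 0, 0, 0; -(β*γ/2), 0, 0, γ - β] := by
  subst hS
  ext i j
  fin_cases i <;> fin_cases j <;>
    simp [symP, TimL, Matrix.mul_apply, Fin.sum_univ_four] <;> ring

theorem tim_M2 (a β : ℝ) (S : Matrix (Fin 4) (Fin 4) ℝ)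
    (hS : S = -β • !![0, 0, 0, 1; 0, 0, a, 0; 0, a, 0, 0; 1, 0, 0, 0]) :
    skewP (S * TimA a) =
      !![0, 0, 0, 0; 0, 0, 0, β*(a^2-1)/2; 0, 0, 0, 0; 0, -(β*(a^2-1)/2), 0, 0] := by
  subst hS
  ext i j
  fin_cases i <;> fin_cases j <;>
    simp [skewP, TimA, Matrix.mul_apply, Fin.sum_univ_four] <;> ring

theorem tim_quad (γ β c x y : ℝ) (hc : 0 < β - c)
    (h : (β - c) * (γ - β - c) = (β*γ/2)^2 + c^2) :
    c * (x^2 + y^2) ≤ β * x^2 - β*γ*x*y + (γ-β)*y^2 := by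
  have : 0 ≤ (β - c) * (β * x^2 - β*γ*x*y + (γ-β)*y^2 - c * (x^2 + y^2)) := by
    have e : (β - c) * (β * x^2 - β*γ*x*y + (γ-β)*y^2 - c * (x^2 + y^2))
      = ((β - c) * x - β*γ/2*y)^2 + (c*y)^2 := by
      linear_combination y^2 * h
    rw [e]; positivity
  linarith [nonneg_of_mul_nonneg_right this hc]

/-- **Conditions (S), (S)₁ (and (S)₂ when `a = 1`) for the Timoshenko system.**
With `S = −β[[0,0,0,1],[0,0,a,0],[0,a,0,0],[1,0,0,0]]` and `0 < β < 4γ/(γ²+4)`: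
`S` is symmetric; `Re⟨((SL)₁+L₁)φ, φ⟩ ≥ c(|φ₁|²+|φ₄|²)`, hence `(SL)₁+L₁ ≥ 0` on `ℂ⁴` and
`Ker((SL)₁+L₁) = span{e₂,e₃} = Ker(L)`; moreover `Re⟨i(SA)₂φ, φ⟩ = β(a²−1)Im(φ₂φ̄₄)`,
which vanishes on `Ker(L₁) = span{e₁,e₂,e₃}`, and `(SA)₂ = 0` when `a = 1`. -/
theorem timoshenko_conditions_S
    (a γ β : ℝ) (ha : 0 < a) (hγ : 0 < γ)
    (hβ0 : 0 < β) (hβ : β < 4 * γ / (γ ^ 2 + 4))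
    (S : Matrix (Fin 4) (Fin 4) ℝ)
    (hS : S = -β • !![0, 0, 0, 1; 0, 0, a, 0; 0, a, 0, 0; 1, 0, 0, 0]) :
    Sᵀ = S ∧
    (∃ c > (0:ℝ), ∀ φ : Fin 4 → ℂ,
      c * (Complex.normSq (φ 0) + Complex.normSq (φ 3))
        ≤ reIP ((cmap (symP (S * TimL γ) + symP (TimL γ))).mulVec φ) φ) ∧
    (∀ φ : Fin 4 → ℂ,
      0 ≤ reIP ((cmap (symP (S * TimL γ) + symP (TimL γ))).mulVec φ) φ) ∧
    kerC (symP (S * TimL γ) + symP (TimL γ)) = {φ : Fin 4 → ℂ | φ 0 = 0 ∧ φ 3 = 0} ∧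
    kerC (symP (S * TimL γ) + symP (TimL γ)) = kerC (TimL γ) ∧
    (∀ φ : Fin 4 → ℂ,
      reIP ((Complex.I • cmap (skewP (S * TimA a))).mulVec φ) φ
        = β * (a ^ 2 - 1) * (φ 1 * (starRingEnd ℂ) (φ 3)).im) ∧
    (∀ φ : Fin 4 → ℂ, φ 3 = 0 →
      reIP ((Complex.I • cmap (skewP (S * TimA a))).mulVec φ) φ = 0) ∧
    (a = 1 → skewP (S * TimA a) = 0) := by
  have hM1 := tim_M1 a γ β S hS
  have hM2 := tim_M2 a β S hS
  have hsym : Sᵀ = S := by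
    subst hS
    ext i j
    fin_cases i <;> fin_cases j <;> simp
  rw [hM1, hM2]
  have hd : β * (γ^2+4) < 4 * γ := (lt_div_iff₀ (by positivity)).1 hβ
  have hdet : 0 < β * (γ - β) - (β*γ/2)^2 := by nlinarith
  have h2 : ∃ c > (0:ℝ), ∀ φ : Fin 4 → ℂ,
      c * (Complex.normSq (φ 0) + Complex.normSq (φ 3))
        ≤ reIP ((cmap !![β, 0, 0, -(β*γ/2); 0, 0, 0, 0; 0, 0, 0, 0;
            -(β*γ/2), 0, 0, γ - β]).mulVec φ) φ := by
    obtain ⟨c, hc⟩ : ∃ c, c = (β * (γ - β) - (β*γ/2)^2) / γ := ⟨_, rfl⟩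
    have hcγ : c * γ = β * (γ - β) - (β*γ/2)^2 := by rw [hc]; field_simp
    have hc0 : 0 < c := by rw [hc]; positivity
    have hcβ : 0 < β - c := by
      have : 0 < (β - c) * γ := by nlinarith [sq_nonneg (β*γ/2), mul_pos hβ0 hβ0]
      exact pos_of_mul_pos_left this hγ.le
    refine ⟨c, hc0, fun φ => ?_⟩
    have hh : (β - c) * (γ - β - c) = (β*γ/2)^2 + c^2 := by linear_combination -hcγ
    have q1 := tim_quad γ β c (φ 0).re (φ 3).re hcβ hh
    have q2 := tim_quad γ β c (φ 0).im (φ 3).im hcβ hh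
    have e : reIP ((cmap !![β, 0, 0, -(β*γ/2); 0, 0, 0, 0; 0, 0, 0, 0;
            -(β*γ/2), 0, 0, γ - β]).mulVec φ) φ
        = (β * (φ 0).re^2 - β*γ*(φ 0).re*(φ 3).re + (γ-β)*(φ 3).re^2)
        + (β * (φ 0).im^2 - β*γ*(φ 0).im*(φ 3).im + (γ-β)*(φ 3).im^2) := by
      simp [reIP, cmap, Matrix.mulVec, dotProduct, Fin.sum_univ_four, Complex.div_re, Complex.div_im]
      ring
    rw [e, Complex.normSq_apply, Complex.normSq_apply]
    linarith
  have hk : kerC !![β, 0, 0, -(β*γ/2); 0, 0, 0, 0; 0, 0, 0, 0; -(β*γ/2), 0, 0, γ - β]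
      = {φ : Fin 4 → ℂ | φ 0 = 0 ∧ φ 3 = 0} := by
    obtain ⟨c, hc0, hc⟩ := h2
    ext φ
    constructor
    · intro h
      have h' := hc φ
      have hz : (cmap !![β, 0, 0, -(β*γ/2); 0, 0, 0, 0; 0, 0, 0, 0;
            -(β*γ/2), 0, 0, γ - β]).mulVec φ = 0 := h
      rw [hz] at h'
      have h0 := Complex.normSq_nonneg (φ 0)
      have h3 := Complex.normSq_nonneg (φ 3)
      have hr : reIP (0 : Fin 4 → ℂ) φ = 0 := by simp [reIP]
      rw [hr] at h'
      have hs : Complex.normSq (φ 0) + Complex.normSq (φ 3) ≤ 0 :=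
        nonpos_of_mul_nonpos_right h' hc0
      exact ⟨Complex.normSq_eq_zero.1 (by linarith), Complex.normSq_eq_zero.1 (by linarith)⟩
    · rintro ⟨h0, h3⟩
      show (cmap _).mulVec φ = 0
      ext i
      fin_cases i <;> simp [cmap, Matrix.mulVec, dotProduct, Fin.sum_univ_four, h0, h3]
  have hkL : kerC (TimL γ) = {φ : Fin 4 → ℂ | φ 0 = 0 ∧ φ 3 = 0} := by
    ext φ
    constructor
    · intro h
      have hz : (cmap (TimL γ)).mulVec φ = 0 := h
      have e0 := congrFun hz 0
      have e3 := congrFun hz 3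
      simp [cmap, TimL, Matrix.mulVec, dotProduct, Fin.sum_univ_four] at e0 e3
      rw [e0] at e3
      exact ⟨by simpa using e3, e0⟩
    · rintro ⟨h0, h3⟩
      show (cmap _).mulVec φ = 0
      ext i
      fin_cases i <;> simp [cmap, TimL, Matrix.mulVec, dotProduct, Fin.sum_univ_four, h0, h3]
  have hI : ∀ φ : Fin 4 → ℂ,
      reIP ((Complex.I • cmap !![0, 0, 0, 0; 0, 0, 0, β*(a^2-1)/2; 0, 0, 0, 0;
          0, -(β*(a^2-1)/2), 0, 0]).mulVec φ) φ
        = β * (a ^ 2 - 1) * (φ 1 * (starRingEnd ℂ) (φ 3)).im := by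
    intro φ
    obtain ⟨k, hk⟩ : ∃ k, k = β*(a^2-1)/2 := ⟨_, rfl⟩
    have hk2 : β*(a^2-1) = 2*k := by rw [hk]; ring
    rw [← hk, hk2]
    simp [reIP, cmap, Matrix.mulVec, dotProduct, Fin.sum_univ_four]
    ring
  refine ⟨hsym, h2, ?_, hk, hk.trans hkL.symm, hI, ?_, ?_⟩
  · obtain ⟨c, hc0, hc⟩ := h2
    intro φ
    refine le_trans ?_ (hc φ)
    have h0 := Complex.normSq_nonneg (φ 0)
    have h3 := Complex.normSq_nonneg (φ 3)
    positivity
  · intro φ h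
    rw [hI, h]; simp
  · intro h
    subst h
    ext i j
    fin_cases i <;> fin_cases j <;> simp
end
end

section
/- Let a > 0, γ > 0 and let A and L be the Timoshenko coefficient matrices. If φ ∈ ℂ⁴ satisfies Lφ = 0, LAφ = 0, LA²φ = 0 and LA³φ = 0, then φ = 0; equivalently, the 16×4 stacked matrix [L; LA; LA²; LA³] has rank 4. Hence the Timoshenko system satisfies the Kalman rank condition (R). -/
open Matrix BigOperators Finset

noncomputable section

/-- **The Timoshenko system satisfies the Kalman rank condition (R).**
If `Lφ = LAφ = LA²φ = LA³φ = 0` then `φ = 0`; equivalently the stacked matrix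
`[L; LA; LA²; LA³]` has rank 4. -/
theorem timoshenko_rank_condition
    (a γ : ℝ) (ha : 0 < a) (hγ : 0 < γ) :
    (∀ φ : Fin 4 → ℂ,
      (cmap (TimL γ)).mulVec φ = 0 →
      (cmap (TimL γ * TimA a)).mulVec φ = 0 →
      (cmap (TimL γ * TimA a ^ 2)).mulVec φ = 0 →
      (cmap (TimL γ * TimA a ^ 3)).mulVec φ = 0 →
      φ = 0) ∧
    Matrix.rank (Matrix.of fun p : Fin 4 × Fin 4 => fun j : Fin 4 =>
      (TimL γ * TimA a ^ (p.1 : ℕ)) p.2 j) = 4 := by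
  have hane : a ≠ 0 := ha.ne'
  constructor
  · intro φ h0 h1 _ _
    have e0 := congrFun h0 0
    have e1 := congrFun h0 3
    have e2 := congrFun h1 0
    have e3 := congrFun h1 3
    simp [cmap, TimL, TimA, Matrix.mulVec, dotProduct, Fin.sum_univ_four, Matrix.mul_apply,
      hane] at e0 e1 e2 e3
    simp [e0, e2] at e1 e3
    funext i
    fin_cases i <;> simp [e0, e1, e2, e3]
  · rw [Matrix.rank, LinearMap.finrank_range_of_inj]
    · simp
    · rw [← LinearMap.ker_eq_bot, LinearMap.ker_eq_bot']
      intro v hv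
      have e0 := congrFun hv (0, 0)
      have e1 := congrFun hv (0, 3)
      have e2 := congrFun hv (1, 0)
      have e3 := congrFun hv (1, 3)
      simp [TimL, TimA, Matrix.mulVec, dotProduct, Fin.sum_univ_four, Matrix.mul_apply,
        hane] at e0 e1 e2 e3
      simp [e0, e2] at e1 e3
      funext i
      fin_cases i <;> simp [e0, e1, e2, e3]
end
end

section
/- Let a > 0 and γ > 0 and let A and L be the Timoshenko coefficient matrices. Then there exist constants C > 0 and c > 0 such that for every ξ ∈ ℝ and every differentiable function û : [0,∞) → ℂ⁴ satisfying û′(t) + iξA û(t) + L û(t) = 0 for all t ≥ 0, one has |û(t)| ≤ C e^{−c η(ξ) t} |û(0)| for all t ≥ 0, where η(ξ) := ξ²/(1 + ξ²)². -/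
open Matrix BigOperators Finset

noncomputable section

/-- Young's inequality for planar vectors. -/
theorem tim_young (k x1 x2 w1 w2 : ℝ) (hk : 0 < k) :
    x1 * w1 + x2 * w2 ≤ k / 4 * (x1 ^ 2 + x2 ^ 2) + (w1 ^ 2 + w2 ^ 2) / k := by
  have h : k / 4 * (x1 ^ 2 + x2 ^ 2) + (w1 ^ 2 + w2 ^ 2) / k - (x1 * w1 + x2 * w2)
      = ((k * x1 / 2 - w1) ^ 2 + (k * x2 / 2 - w2) ^ 2) / k := by
    field_simp
    ring
  have : 0 ≤ ((k * x1 / 2 - w1) ^ 2 + (k * x2 / 2 - w2) ^ 2) / k := by positivity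
  linarith

set_option maxHeartbeats 2000000 in
/-- The dissipation estimate. -/
theorem tim_diss (a γ κ δ c p q v1 v2 u1 u2 z1 z2 y1 y2 : ℝ) (ha : 0 < a) (hκ : 0 < κ)
    (hδ : 0 < δ)
    (hκ1 : κ * (1 + 1 / a) ≤ 1 / 4)
    (hδ1 : δ * (1 + γ ^ 2 + (1 - a ^ 2) ^ 2 / κ + κ + κ * a + κ * (γ ^ 2 / a)) ≤ γ)
    (hc1 : c ≤ δ / 2) (hc2 : c ≤ κ * δ / 2) (hc3 : c ≤ κ * δ * a / 2) (hc4 : c ≤ γ)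
    (hc0 : 0 < c)
    (hp0 : 0 < p) (hp1 : p ≤ 1) (hqp : q ^ 2 ≤ p) :
    -2 * γ * (y1 ^ 2 + y2 ^ 2)
      - δ * (p * (v1 ^ 2 + v2 ^ 2) - p * (y1 ^ 2 + y2 ^ 2) - γ * p * (v1 * y1 + v2 * y2)
        + (1 - a ^ 2) * q * (u1 * y2 - u2 * y1))
      + κ * δ * (-q ^ 2 * (u1 ^ 2 + u2 ^ 2) + q ^ 2 * (v1 ^ 2 + v2 ^ 2)
        - p * q * (y1 * u2 - y2 * u1))
      + κ * δ * (-a * q ^ 2 * (z1 ^ 2 + z2 ^ 2) + a * q ^ 2 * (y1 ^ 2 + y2 ^ 2)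
        + p * q * (v1 * z2 - v2 * z1) - γ * p * q * (y1 * z2 - y2 * z1))
    ≤ -c * q ^ 2 * (v1 ^ 2 + v2 ^ 2 + u1 ^ 2 + u2 ^ 2 + z1 ^ 2 + z2 ^ 2 + y1 ^ 2 + y2 ^ 2) := by
  set V := v1 ^ 2 + v2 ^ 2 with hV
  set U := u1 ^ 2 + u2 ^ 2 with hU
  set Z := z1 ^ 2 + z2 ^ 2 with hZ
  set Y := y1 ^ 2 + y2 ^ 2 with hY
  have hV0 : 0 ≤ V := by positivity
  have hU0 : 0 ≤ U := by positivity
  have hZ0 : 0 ≤ Z := by positivity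
  have hY0 : 0 ≤ Y := by positivity
  have hp2 : p ^ 2 ≤ p := by nlinarith
  have hp21 : p ^ 2 ≤ 1 := by nlinarith
  have hq1 : q ^ 2 ≤ 1 := by linarith
  -- the six Young inequalities
  have e1 : γ * p * (v1 * y1 + v2 * y2) ≤ p / 4 * V + γ ^ 2 * Y := by
    have h := tim_young 1 v1 v2 (γ * y1) (γ * y2) one_pos
    have h2 := mul_le_mul_of_nonneg_left h hp0.le
    have h3 : p * (γ ^ 2 * Y) ≤ 1 * (γ ^ 2 * Y) :=
      mul_le_mul_of_nonneg_right hp1 (by positivity)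
    rw [hV, hY] at *
    linarith
  have e2 : -((1 - a ^ 2) * q * (u1 * y2 - u2 * y1))
      ≤ κ / 4 * (q ^ 2 * U) + (1 - a ^ 2) ^ 2 / κ * Y := by
    have h := tim_young κ (q * u1) (q * u2) (-(1 - a ^ 2) * y2) ((1 - a ^ 2) * y1) hκ
    have h3 : ((-(1 - a ^ 2) * y2) ^ 2 + ((1 - a ^ 2) * y1) ^ 2) / κ
      = (1 - a ^ 2) ^ 2 / κ * Y := by rw [hY]; ring
    rw [h3] at h
    rw [hU]
    linarith
  have e3 : -(p * q * (y1 * u2 - y2 * u1)) ≤ 1 / 4 * (q ^ 2 * U) + Y := by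
    have h := tim_young 1 (q * u1) (q * u2) (p * y2) (-p * y1) one_pos
    have h3 : p ^ 2 * Y ≤ 1 * Y := mul_le_mul_of_nonneg_right hp21 hY0
    rw [hU, hY] at *
    linarith
  have e4 : p * q * (v1 * z2 - v2 * z1) ≤ a / 4 * (q ^ 2 * Z) + 1 / a * (p * V) := by
    have h := tim_young a (q * z1) (q * z2) (-p * v2) (p * v1) ha
    have h3 : ((-p * v2) ^ 2 + (p * v1) ^ 2) / a = 1 / a * (p ^ 2 * V) := by rw [hV]; ring
    have h4 : 1 / a * (p ^ 2 * V) ≤ 1 / a * (p * V) := by gcongr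
    rw [h3] at h
    rw [hZ]
    linarith
  have e5 : -(γ * p * q * (y1 * z2 - y2 * z1)) ≤ a / 4 * (q ^ 2 * Z) + γ ^ 2 / a * Y := by
    have h := tim_young a (q * z1) (q * z2) (γ * p * y2) (-γ * p * y1) ha
    have h3 : ((γ * p * y2) ^ 2 + (-γ * p * y1) ^ 2) / a = γ ^ 2 / a * (p ^ 2 * Y) := by
      rw [hY]; ring
    have h4 : γ ^ 2 / a * (p ^ 2 * Y) ≤ γ ^ 2 / a * (1 * Y) := by gcongr
    rw [h3] at h
    rw [hZ]
    linarith
  have e6 : q ^ 2 * V ≤ p * V := by gcongr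
  have e7 : q ^ 2 * Y ≤ Y := by nlinarith
  have hκδ : 0 < κ * δ := by positivity
  have hκa : 0 < κ * δ * a := by positivity
  have f1 := mul_le_mul_of_nonneg_left e1 hδ.le
  have f2 := mul_le_mul_of_nonneg_left e2 hδ.le
  have f3 := mul_le_mul_of_nonneg_left e3 hκδ.le
  have f4 := mul_le_mul_of_nonneg_left e4 hκδ.le
  have f5 := mul_le_mul_of_nonneg_left e5 hκδ.le
  have f6 := mul_le_mul_of_nonneg_left e6 hκδ.le
  have f7 := mul_le_mul_of_nonneg_left e7 hκa.le
  have f8 : δ * p * Y ≤ δ * Y := by nlinarith [mul_nonneg hδ.le hY0]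
  have g1 := mul_le_mul_of_nonneg_right hδ1 hY0
  have g2 := mul_le_mul_of_nonneg_right hκ1 (show 0 ≤ δ * (p * V) by positivity)
  have k1 : c * (q ^ 2 * V) ≤ δ / 2 * (p * V) := by gcongr
  have k2 : c * (q ^ 2 * U) ≤ κ * δ / 2 * (q ^ 2 * U) := by gcongr
  have k3 : c * (q ^ 2 * Z) ≤ κ * δ * a / 2 * (q ^ 2 * Z) := by gcongr
  have k4 : c * (q ^ 2 * Y) ≤ γ * Y :=
    mul_le_mul hc4 e7 (by positivity) (hc0.le.trans hc4)
  have hN : v1 ^ 2 + v2 ^ 2 + u1 ^ 2 + u2 ^ 2 + z1 ^ 2 + z2 ^ 2 + y1 ^ 2 + y2 ^ 2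
    = V + U + Z + Y := by rw [hV, hU, hZ, hY]; ring
  rw [hN]
  linarith

/-- Lyapunov functional. -/
def timF (a κ δ p q v1 v2 u1 u2 z1 z2 y1 y2 : ℝ) : ℝ :=
  (v1 * v1 + v2 * v2 + u1 * u1 + u2 * u2 + z1 * z1 + z2 * z2 + y1 * y1 + y2 * y2)
    - δ * p * (v1 * y1 + v2 * y2 + a * (u1 * z1 + u2 * z2))
    + κ * δ * p * q * (v1 * u2 - v2 * u1 + (y1 * z2 - y2 * z1))

theorem timF_equiv (a κ δ p q v1 v2 u1 u2 z1 z2 y1 y2 : ℝ) (ha : 0 < a) (hκ : 0 < κ)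
    (hδ : 0 < δ) (hδ2 : δ * (1 + a + 2 * κ) ≤ 1)
    (hp0 : 0 < p) (hp1 : p ≤ 1) (hqp : q ^ 2 ≤ p) :
    |timF a κ δ p q v1 v2 u1 u2 z1 z2 y1 y2
      - (v1 ^ 2 + v2 ^ 2 + u1 ^ 2 + u2 ^ 2 + z1 ^ 2 + z2 ^ 2 + y1 ^ 2 + y2 ^ 2)| ≤
      (v1 ^ 2 + v2 ^ 2 + u1 ^ 2 + u2 ^ 2 + z1 ^ 2 + z2 ^ 2 + y1 ^ 2 + y2 ^ 2) / 2 := by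
  set N := v1 ^ 2 + v2 ^ 2 + u1 ^ 2 + u2 ^ 2 + z1 ^ 2 + z2 ^ 2 + y1 ^ 2 + y2 ^ 2 with hN
  have hN0 : 0 ≤ N := by positivity
  have hq : |q| ≤ 1 := by
    rw [abs_le]; constructor <;> nlinarith
  have b1 : |v1 * y1 + v2 * y2| ≤ N / 2 := by
    rw [abs_le, hN]; constructor
    · nlinarith [sq_nonneg (v1 + y1), sq_nonneg (v2 + y2), sq_nonneg u1, sq_nonneg u2, sq_nonneg z1, sq_nonneg z2]
    · nlinarith [sq_nonneg (v1 - y1), sq_nonneg (v2 - y2), sq_nonneg u1, sq_nonneg u2, sq_nonneg z1, sq_nonneg z2]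
  have b2 : |u1 * z1 + u2 * z2| ≤ N / 2 := by
    rw [abs_le, hN]; constructor
    · nlinarith [sq_nonneg (u1 + z1), sq_nonneg (u2 + z2), sq_nonneg v1, sq_nonneg v2, sq_nonneg y1, sq_nonneg y2]
    · nlinarith [sq_nonneg (u1 - z1), sq_nonneg (u2 - z2), sq_nonneg v1, sq_nonneg v2, sq_nonneg y1, sq_nonneg y2]
  have b3 : |v1 * u2 - v2 * u1 + (y1 * z2 - y2 * z1)| ≤ N / 2 := by
    rw [abs_le, hN]; constructor
    · nlinarith [sq_nonneg (v1 + u2), sq_nonneg (v2 - u1), sq_nonneg (y1 + z2), sq_nonneg (y2 - z1)]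
    · nlinarith [sq_nonneg (v1 - u2), sq_nonneg (v2 + u1), sq_nonneg (y1 - z2), sq_nonneg (y2 + z1)]
  have hs : timF a κ δ p q v1 v2 u1 u2 z1 z2 y1 y2 - N =
      -(δ * p * (v1 * y1 + v2 * y2)) + -(δ * a * p * (u1 * z1 + u2 * z2))
       + κ * δ * p * q * (v1 * u2 - v2 * u1 + (y1 * z2 - y2 * z1)) := by
    rw [timF, hN]; ring
  rw [hs]
  have d1 : |-(δ * p * (v1 * y1 + v2 * y2))| ≤ δ * 1 * (N / 2) := by
    rw [abs_neg, abs_mul, abs_mul, abs_of_pos hδ, abs_of_pos hp0]; gcongr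
  have d2 : |-(δ * a * p * (u1 * z1 + u2 * z2))| ≤ δ * a * 1 * (N / 2) := by
    rw [abs_neg, abs_mul, abs_mul, abs_mul, abs_of_pos hδ, abs_of_pos hp0, abs_of_pos ha]; gcongr
  have d3 : |κ * δ * p * q * (v1 * u2 - v2 * u1 + (y1 * z2 - y2 * z1))|
      ≤ κ * δ * 1 * 1 * (N / 2) := by
    rw [abs_mul, abs_mul, abs_mul, abs_mul, abs_of_pos hδ, abs_of_pos hp0, abs_of_pos hκ]; gcongr
  have t1 := abs_add_three (-(δ * p * (v1 * y1 + v2 * y2))) (-(δ * a * p * (u1 * z1 + u2 * z2)))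
    (κ * δ * p * q * (v1 * u2 - v2 * u1 + (y1 * z2 - y2 * z1)))
  have m := mul_le_mul_of_nonneg_right hδ2 hN0
  have m2 : 0 ≤ κ * δ * N := by positivity
  nlinarith

/-- Choice of constants. -/
theorem tim_consts (a γ : ℝ) (ha : 0 < a) (hγ : 0 < γ) : ∃ κ > (0:ℝ), ∃ δ > (0:ℝ), ∃ c > (0:ℝ),
    κ * (1 + 1 / a) ≤ 1 / 4 ∧
    δ * (1 + γ ^ 2 + (1 - a ^ 2) ^ 2 / κ + κ + κ * a + κ * (γ ^ 2 / a)) ≤ γ ∧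
    δ * (1 + a + 2 * κ) ≤ 1 ∧
    c ≤ δ / 2 ∧ c ≤ κ * δ / 2 ∧ c ≤ κ * δ * a / 2 ∧ c ≤ γ := by
  obtain ⟨κ, hκ, hκ1⟩ : ∃ κ > (0:ℝ), κ * (1 + 1 / a) ≤ 1 / 4 := by
    refine ⟨1 / 4 / (1 + 1 / a), by positivity, ?_⟩
    rw [div_mul_cancel₀]
    positivity
  set B := 1 + γ ^ 2 + (1 - a ^ 2) ^ 2 / κ + κ + κ * a + κ * (γ ^ 2 / a) with hB
  have hB0 : 0 < B := by positivity
  have hD0 : 0 < 1 + a + 2 * κ := by positivity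
  have hδ : 0 < min (γ / B) (1 / (1 + a + 2 * κ)) := lt_min (by positivity) (by positivity)
  obtain ⟨δ, hδe⟩ : ∃ δ, δ = min (γ / B) (1 / (1 + a + 2 * κ)) := ⟨_, rfl⟩
  rw [← hδe] at hδ
  refine ⟨κ, hκ, δ, hδ, min (min (δ / 2) (κ * δ / 2)) (min (κ * δ * a / 2) γ), ?_, hκ1,
    ?_, ?_, ?_, ?_, ?_, ?_⟩
  · exact lt_min (lt_min (by positivity) (by positivity)) (lt_min (by positivity) hγ)
  · rw [← le_div_iff₀ hB0, hδe]; exact min_le_left _ _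
  · rw [← le_div_iff₀ hD0, hδe]; exact min_le_right _ _
  · exact (min_le_left _ _).trans (min_le_left _ _)
  · exact (min_le_left _ _).trans (min_le_right _ _)
  · exact (min_le_right _ _).trans (min_le_left _ _)
  · exact (min_le_right _ _).trans (min_le_right _ _)

/-- Gronwall-type decay. -/
theorem tim_gronwall (F F' : ℝ → ℝ) (k : ℝ)
    (hF : ∀ t : ℝ, 0 ≤ t → HasDerivWithinAt F (F' t) (Set.Ici 0) t)
    (hle : ∀ t : ℝ, 0 ≤ t → F' t ≤ -k * F t) (t : ℝ) (ht : 0 ≤ t) :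
    F t ≤ Real.exp (-(k * t)) * F 0 := by
  have hG : ∀ s : ℝ, 0 ≤ s → HasDerivWithinAt (fun s => Real.exp (k * s) * F s)
      (Real.exp (k * s) * (k * 1) * F s + Real.exp (k * s) * F' s) (Set.Ici 0) s := by
    intro s hs
    exact (((hasDerivAt_id s).const_mul k).exp.hasDerivWithinAt).mul (hF s hs)
  have anti : AntitoneOn (fun s => Real.exp (k * s) * F s) (Set.Ici 0) := by
    apply antitoneOn_of_hasDerivWithinAt_nonpos (convex_Ici 0)
      (fun s hs => (hG s hs).continuousWithinAt)
      (f' := fun s => Real.exp (k * s) * (k * 1) * F s + Real.exp (k * s) * F' s)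
    · intro s hs
      exact (hG s (interior_subset hs)).mono interior_subset
    · intro s hs
      have h1 := mul_le_mul_of_nonneg_left (hle s (interior_subset hs)) (Real.exp_pos (k * s)).le
      linarith
  have h := anti (Set.mem_Ici.2 le_rfl) (Set.mem_Ici.2 ht) ht
  simp only [mul_zero, Real.exp_zero, one_mul] at h
  have h2 := mul_le_mul_of_nonneg_left h (Real.exp_pos (-(k * t))).le
  rwa [← mul_assoc, ← Real.exp_add, neg_add_cancel, Real.exp_zero, one_mul] at h2

/-- **Theorem 6.1 (decay for the Timoshenko system, `a > 0`).**
Solutions of `û′ + iξA û + L û = 0` satisfy `|û(t)| ≤ C e^{−c η(ξ) t}|û(0)|`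
with `η(ξ) = ξ²/(1+ξ²)²`. -/
theorem timoshenko_pointwise_decay
    (a γ : ℝ) (ha : 0 < a) (hγ : 0 < γ) :
    ∃ C > (0:ℝ), ∃ c > (0:ℝ), ∀ ξ : ℝ,
      ∀ u u' : ℝ → (Fin 4 → ℂ),
      (∀ t : ℝ, 0 ≤ t → HasDerivWithinAt u (u' t) (Set.Ici 0) t) →
      (∀ t : ℝ, 0 ≤ t →
        u' t + ((ξ : ℂ) * Complex.I) • (cmap (TimA a)).mulVec (u t)
          + (cmap (TimL γ)).mulVec (u t) = 0) →
      ∀ t : ℝ, 0 ≤ t →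
        cnrm (u t) ≤ C * Real.exp (-(c * (ξ ^ 2 / (1 + ξ ^ 2) ^ 2) * t)) * cnrm (u 0) := by
  obtain ⟨κ, hκ, δ, hδ, c, hc, hκ1, hδ1, hδ2, hc1, hc2, hc3, hc4⟩ := tim_consts a γ ha hγ
  refine ⟨2, by norm_num, c / 3, by positivity, ?_⟩
  intro ξ u u' hu hode t ht
  set p : ℝ := 1 / (1 + ξ ^ 2) with hp
  have hr : 0 < 1 + ξ ^ 2 := by positivity
  have hp0 : 0 < p := by positivity
  have hpξ : p + ξ ^ 2 * p = 1 := by rw [hp]; field_simp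
  have hp1 : p ≤ 1 := by nlinarith [mul_nonneg (sq_nonneg ξ) hp0.le]
  have hqp : (ξ * p) ^ 2 ≤ p := by nlinarith [mul_nonneg (sq_nonneg ξ) hp0.le]
  have hη : ξ ^ 2 / (1 + ξ ^ 2) ^ 2 = (ξ * p) ^ 2 := by rw [hp]; field_simp
  rw [hη]
  have hre : ∀ i : Fin 4, ∀ s : ℝ, 0 ≤ s →
      HasDerivWithinAt (fun s => (u s i).re) ((u' s i).re) (Set.Ici 0) s := by
    intro i s hs
    exact Complex.reCLM.hasFDerivAt.comp_hasDerivWithinAt s (hasDerivWithinAt_pi.1 (hu s hs) i)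
  have him : ∀ i : Fin 4, ∀ s : ℝ, 0 ≤ s →
      HasDerivWithinAt (fun s => (u s i).im) ((u' s i).im) (Set.Ici 0) s := by
    intro i s hs
    exact Complex.imCLM.hasFDerivAt.comp_hasDerivWithinAt s (hasDerivWithinAt_pi.1 (hu s hs) i)
  have hE : ∀ s : ℝ, 0 ≤ s →
      (u' s 0).re = -ξ * (u s 1).im - (u s 3).re ∧ (u' s 0).im = ξ * (u s 1).re - (u s 3).im ∧
      (u' s 1).re = -ξ * (u s 0).im ∧ (u' s 1).im = ξ * (u s 0).re ∧
      (u' s 2).re = -ξ * a * (u s 3).im ∧ (u' s 2).im = ξ * a * (u s 3).re ∧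
      (u' s 3).re = -ξ * a * (u s 2).im + (u s 0).re - γ * (u s 3).re ∧
      (u' s 3).im = ξ * a * (u s 2).re + (u s 0).im - γ * (u s 3).im := by
    intro s hs
    have h := hode s hs
    have h0 := congrFun h 0
    have h1 := congrFun h 1
    have h2 := congrFun h 2
    have h3 := congrFun h 3
    simp [cmap, TimA, TimL, Matrix.mulVec, dotProduct, Fin.sum_univ_four, Complex.ext_iff]
      at h0 h1 h2 h3
    obtain ⟨h0r, h0i⟩ := h0
    obtain ⟨h1r, h1i⟩ := h1
    obtain ⟨h2r, h2i⟩ := h2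
    obtain ⟨h3r, h3i⟩ := h3
    refine ⟨?_, ?_, ?_, ?_, ?_, ?_, ?_, ?_⟩ <;> linarith
  set N : ℝ → ℝ := fun s => (u s 0).re ^ 2 + (u s 0).im ^ 2 + (u s 1).re ^ 2 + (u s 1).im ^ 2
    + (u s 2).re ^ 2 + (u s 2).im ^ 2 + (u s 3).re ^ 2 + (u s 3).im ^ 2 with hN
  have hN0 : ∀ s, 0 ≤ N s := fun s => by simp only [hN]; positivity
  have hcn : ∀ s, cnrm (u s) = Real.sqrt (N s) := by
    intro s
    simp only [cnrm, hN, Fin.sum_univ_four, Complex.normSq_apply]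
    congr 1
    ring
  set F : ℝ → ℝ := fun s => timF a κ δ p (ξ * p) (u s 0).re (u s 0).im (u s 1).re (u s 1).im
    (u s 2).re (u s 2).im (u s 3).re (u s 3).im with hF
  have hFN : ∀ s, |F s - N s| ≤ N s / 2 := fun s =>
    timF_equiv a κ δ p (ξ * p) _ _ _ _ _ _ _ _ ha hκ hδ hδ2 hp0 hp1 hqp
  have hder : ∀ s, 0 ≤ s → ∃ D, HasDerivWithinAt F D (Set.Ici 0) s ∧
      D ≤ -c * (ξ * p) ^ 2 * N s := by
    intro s hs
    have a0 := hre 0 s hs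
    have b0 := him 0 s hs
    have a1 := hre 1 s hs
    have b1 := him 1 s hs
    have a2 := hre 2 s hs
    have b2 := him 2 s hs
    have a3 := hre 3 s hs
    have b3 := him 3 s hs
    have hd := (((((((((a0.mul a0).add (b0.mul b0)).add (a1.mul a1)).add (b1.mul b1)).add
      (a2.mul a2)).add (b2.mul b2)).add (a3.mul a3)).add (b3.mul b3)).sub
      ((((a0.mul a3).add (b0.mul b3)).add
        (((a1.mul a2).add (b1.mul b2)).const_mul a)).const_mul (δ * p))).add
      ((((a0.mul b1).sub (b0.mul a1)).add ((a3.mul b2).sub (b3.mul a2))).const_mul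
        (κ * δ * p * (ξ * p)))
    refine ⟨_, hd, ?_⟩
    have hdiss := tim_diss a γ κ δ c p (ξ * p) (u s 0).re (u s 0).im (u s 1).re (u s 1).im
      (u s 2).re (u s 2).im (u s 3).re (u s 3).im ha hκ hδ hκ1 hδ1 hc1 hc2 hc3 hc4 hc hp0 hp1 hqp
    obtain ⟨e0, e1, e2, e3, e4, e5, e6, e7⟩ := hE s hs
    rw [e0, e1, e2, e3, e4, e5, e6, e7]
    refine le_trans (le_of_eq ?_) hdiss
    ring
  choose! F' hF' hF'le using hder
  have hk : 0 ≤ c * (ξ * p) ^ 2 := by positivity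
  have key := tim_gronwall F F' (2 * (c / 3 * (ξ * p) ^ 2)) hF' (by
    intro s hs
    have h1 := hF'le s hs
    have h2 := (abs_le.1 (hFN s)).2
    have h3 := mul_le_mul_of_nonneg_left (show F s ≤ 3 / 2 * N s by linarith) hk
    linarith) t ht
  have hfin : N t ≤ (2 * Real.exp (-(c / 3 * (ξ * p) ^ 2 * t))) ^ 2 * N 0 := by
    have h1 := (abs_le.1 (hFN t)).1
    have h2 := (abs_le.1 (hFN 0)).2
    have h3 : Real.exp (-(2 * (c / 3 * (ξ * p) ^ 2) * t))
        = Real.exp (-(c / 3 * (ξ * p) ^ 2 * t)) ^ 2 := by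
      rw [← Real.exp_nat_mul]; congr 1; push_cast; ring
    rw [h3] at key
    have h4 := mul_le_mul_of_nonneg_left (show F 0 ≤ 3 / 2 * N 0 by linarith)
      (sq_nonneg (Real.exp (-(c / 3 * (ξ * p) ^ 2 * t))))
    have h5 := mul_nonneg (sq_nonneg (Real.exp (-(c / 3 * (ξ * p) ^ 2 * t)))) (hN0 0)
    nlinarith
  rw [hcn, hcn]
  refine Real.sqrt_le_iff.2 ⟨by positivity, ?_⟩
  rw [mul_pow, Real.sq_sqrt (hN0 0)]
  exact hfin
end
end
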